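/- arXiv:2510.21098 — 8 statements merged into one kernel-verified Lean document; each statement's English description precedes it below -/
import Mathlib

section
/- Let φ, Ψ : ℝ → ℝ be continuous 1-periodic functions with ∫₀¹ φ(x) dx = 0, let β ∈ ℝ, and set g(x) := x + β + Ψ(x) + φ(x) (note g(x+1) = g(x)+1 automatically). Assume g is a strictly increasing homeomorphism of ℝ. Then the graph Γ_Ψ = {(x, Ψ(x)) : x ∈ ℝ} satisfies F_β^φ(Γ_Ψ) = Γ_Ψ if and only if g(x) + g⁻¹(x) = 2x + φ(x) for all x ∈ ℝ. -/
/-!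
On the graph, `F (x, Ψ x) = (g x, Ψ x + φ x)`. Since `g` is a bijection, invariance of the graph
amounts to `Ψ (g x) = Ψ x + φ x = g x - x - β` for all `x`, that is, with `y = g x`,
`Ψ y = y - g⁻¹ y - β`. Substituting this in `g y = y + β + Ψ y + φ y` is exactly
`g y + g⁻¹ y = 2 y + φ y`.
-/

open Real Filter Set

noncomputable section

/-- The twist map `F_β^φ(x,y) = (x + β + y + φ(x), y + φ(x))`. -/
def twist (β : ℝ) (φ : ℝ → ℝ) : ℝ × ℝ → ℝ × ℝ :=
  fun p => (p.1 + β + p.2 + φ p.1, p.2 + φ p.1)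

/-- The graph `Γ_Ψ = {(x, Ψ(x)) : x ∈ ℝ}`. -/
def graphOf (Ψ : ℝ → ℝ) : Set (ℝ × ℝ) := {p : ℝ × ℝ | p.2 = Ψ p.1}

/-- Herman's formula: the graph of `Ψ` is invariant under the twist map `F_β^φ`
iff `g + g⁻¹ = 2·Id + φ`, where `g = Id + β + Ψ + φ`. -/
theorem stmt_0 (φ Ψ : ℝ → ℝ) (hφc : Continuous φ) (hφp : Function.Periodic φ 1)
    (hΨc : Continuous Ψ) (hΨp : Function.Periodic Ψ 1)
    (hmean : ∫ x in (0:ℝ)..1, φ x = 0) (β : ℝ)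
    (g : ℝ → ℝ) (hgdef : ∀ x, g x = x + β + Ψ x + φ x)
    (hgmono : StrictMono g) (hgsurj : Function.Surjective g) :
    twist β φ '' graphOf Ψ = graphOf Ψ ↔
      ∀ x, g x + Function.invFun g x = 2 * x + φ x := by
  have hinv : ∀ x, Function.invFun g (g x) = x :=
    Function.leftInverse_invFun hgmono.injective
  have hright : ∀ y, g (Function.invFun g y) = y :=
    Function.rightInverse_invFun hgsurj
  constructor
  · intro h y
    -- `F` sends the graph point over `g⁻¹ y` to a graph point over `y`.
    have hmem : twist β φ (Function.invFun g y, Ψ (Function.invFun g y)) ∈ graphOf Ψ :=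
      h ▸ mem_image_of_mem _ rfl
    simp only [twist, graphOf, mem_setOf_eq, ← hgdef, hright] at hmem
    have h1 := hgdef (Function.invFun g y)
    rw [hright] at h1
    linarith [hgdef y]
  · intro h
    have key : ∀ x, Ψ x + φ x = Ψ (g x) := by
      intro x
      have h1 := h (g x)
      rw [hinv] at h1
      linarith [hgdef x, hgdef (g x)]
    ext ⟨a, b⟩
    constructor
    · rintro ⟨⟨x, y⟩, hxy, heq⟩
      simp only [graphOf, mem_setOf_eq] at hxy
      subst hxy
      rw [← heq]
      simp only [twist, graphOf, mem_setOf_eq, ← hgdef, key]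
    · intro hab
      simp only [graphOf, mem_setOf_eq] at hab
      subst hab
      refine ⟨(Function.invFun g a, Ψ (Function.invFun g a)), rfl, ?_⟩
      simp only [twist, ← hgdef, key, hright]
end
end

section
/- Fix κ > 0, β ∈ ℝ, and n ∈ ℕ with n ≥ 1 and n^κ > 2π. Define g_n(x) := x + β + n^{−(κ+1)} sin(2πnx) and f_{β,n}(x) := x + nβ + n^{−κ} sin(2πx); both are strictly increasing and satisfy g(x+1) = g(x)+1. Then ρ(g_n) = ρ(f_{β,n})/n. -/
/-!
Multiplication by `n` conjugates `g` to `f`: `n * g x = f (n * x)`. Hence `n * g^[m] 0 = f^[m] 0`,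
and the two rotation numbers differ by the factor `n` as soon as that of `f` exists. For existence,
`sin` is 1-Lipschitz and `n ^ κ > 2π`, so `f` is monotone; it is therefore a lift of a monotone
degree one circle map (`CircleDeg1Lift`), for which Mathlib proves convergence of `f^[m] 0 / m`.
-/

open Real Filter Set

noncomputable section

/-- `g` has rotation number `α`: `gᵐ(0)/m → α`. -/
def HasRotationNumber (g : ℝ → ℝ) (α : ℝ) : Prop :=
  Tendsto (fun m : ℕ => g^[m] 0 / m) atTop (nhds α)

theorem monotone_add_mul_sin {c d : ℝ} (hc : 0 ≤ c) (hc' : c * (2 * π) ≤ 1) :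
    Monotone fun x : ℝ => x + d + c * Real.sin (2 * π * x) := by
  intro x y hxy
  have h := Real.abs_sin_sub_sin_le (2 * π * x) (2 * π * y)
  rw [abs_sub_comm (2 * π * x), abs_of_nonneg (a := 2 * π * y - 2 * π * x)
    (by nlinarith [Real.pi_pos])] at h
  have h1 := mul_le_mul_of_nonneg_left ((le_abs_self _).trans h) hc
  have h2 := mul_le_mul_of_nonneg_right hc' (sub_nonneg.2 hxy)
  simp only
  linarith

/-- For `g_n(x) = x + β + n^{-(κ+1)} sin(2πnx)` and
`f_{β,n}(x) = x + nβ + n^{-κ} sin(2πx)`, one has `ρ(g_n) = ρ(f_{β,n})/n`. -/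
theorem stmt_1 (κ : ℝ) (hκ : 0 < κ) (β : ℝ) (n : ℕ) (hn : 1 ≤ n)
    (hnκ : (n : ℝ) ^ κ > 2 * π)
    (g f : ℝ → ℝ)
    (hg : ∀ x, g x = x + β + ((n : ℝ) ^ (κ + 1))⁻¹ * Real.sin (2 * π * n * x))
    (hf : ∀ x, f x = x + n * β + ((n : ℝ) ^ κ)⁻¹ * Real.sin (2 * π * x)) :
    ∃ a b : ℝ, HasRotationNumber g a ∧ HasRotationNumber f b ∧ a = b / n := by
  have hn0 : (0 : ℝ) < n := by exact_mod_cast hn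
  have hpos : (0 : ℝ) < (n : ℝ) ^ κ := Real.rpow_pos_of_pos hn0 κ
  have hmono : Monotone f := by
    have h := monotone_add_mul_sin (c := ((n : ℝ) ^ κ)⁻¹) (d := n * β) (inv_nonneg.2 hpos.le)
      (by rw [inv_mul_le_iff₀ hpos, mul_one]; exact hnκ.le)
    simpa only [← hf] using h
  have hper : ∀ x, f (x + 1) = f x + 1 := by
    intro x
    rw [hf, hf, mul_add, mul_one, Real.sin_add_two_pi]
    ring
  let F : CircleDeg1Lift := ⟨⟨f, hmono⟩, hper⟩
  have hF : HasRotationNumber f F.translationNumber := by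
    have h := F.tendsto_translation_number₀
    simp only [CircleDeg1Lift.coe_pow] at h
    exact h
  have hconj : Function.Semiconj (fun x : ℝ => n * x) g f := by
    intro x
    simp only [hg, hf]
    rw [Real.rpow_add_one hn0.ne', ← mul_assoc (2 * π)]
    field_simp
  refine ⟨F.translationNumber / n, F.translationNumber, ?_, hF, rfl⟩
  refine (Tendsto.div_const hF (n : ℝ)).congr fun m => ?_
  have h := (hconj.iterate_right m).eq 0
  simp only [mul_zero] at h
  rw [← h]
  field_simp
end
end

section
/- Fix an integer ι ≥ 2, ν ∈ (0,1/2), and an integer m ≥ 2. There exist C > 0 and N ∈ ℕ such that for all n ≥ N (so that n^{ι−ν−1} > 2π), all β ∈ ℝ, and all x ∈ ℝ, the m-th derivative of the inverse of g_{β,n} satisfies |(g_{β,n}^{−1})^{(m)}(x)| ≤ C n^{m−(ι−ν)}. -/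
/-!
Write `a = n^{-(ι-ν)}`, `h = g⁻¹`, `s = sin (2πn h)`, `c = cos (2πn h)` and `w = h'`. The inverse
function theorem gives `w = 1 / (1 + 2π (na) c)`, and for large `n` the number `na = n^{1-ι+ν}` is
at most `1/(4π)`, so that `0 ≤ w ≤ 2`. Moreover
`s' = n · 2π c w`, `c' = -n · 2π s w`, `w' = n · 4π² (na) s w³`.
Hence every polynomial in `s`, `c`, `w` and bounded constants (such as `na`) is bounded uniformly in
`n, β, x`, and its derivative is `n` times a polynomial of the same kind (`Good.bounded`,
`Good.deriv`). As `h'' = n² a · 4π² s w³`, induction gives `h^{(m)} = n^m a · u_m` with `u_m` such a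
polynomial (`iteratedDeriv_eq_good`), which is the claim because `n^m a = n^{m-(ι-ν)}`.
-/

open Real Filter Set

noncomputable section

/-- The modified Arnold circle map lift `g_{β,n}(x) = x + β + n^{-(ι-ν)} sin(2πnx)`. -/
def gA (ι : ℕ) (ν β : ℝ) (n : ℕ) : ℝ → ℝ :=
  fun x => x + β + ((n : ℝ) ^ ((ι : ℝ) - ν))⁻¹ * Real.sin (2 * π * n * x)

/-- Families of functions `ℝ → ℝ`, indexed by parameters `p : P`, that are polynomial in the
families `s`, `c`, `w` with coefficients depending on the parameter only, boundedly. -/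
inductive Good {P : Type} (s c w : P → ℝ → ℝ) : (P → ℝ → ℝ) → Prop
  | sin : Good s c w s
  | cos : Good s c w c
  | inv : Good s c w w
  | const (k : P → ℝ) (K : ℝ) (hk : ∀ p, |k p| ≤ K) : Good s c w (fun p _ => k p)
  | add {u v} : Good s c w u → Good s c w v → Good s c w (fun p x => u p x + v p x)
  | mul {u v} : Good s c w u → Good s c w v → Good s c w (fun p x => u p x * v p x)

theorem Good.bounded {P : Type} {s c w : P → ℝ → ℝ}
    (hs : ∀ p x, |s p x| ≤ 1) (hc : ∀ p x, |c p x| ≤ 1) (hw : ∀ p x, |w p x| ≤ 2)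
    {u : P → ℝ → ℝ} (hu : Good s c w u) : ∃ C : ℝ, ∀ p x, |u p x| ≤ C := by
  induction hu with
  | sin => exact ⟨1, hs⟩
  | cos => exact ⟨1, hc⟩
  | inv => exact ⟨2, hw⟩
  | const k K hk => exact ⟨K, fun p _ => hk p⟩
  | add _ _ ihu ihv =>
    obtain ⟨A, hA⟩ := ihu
    obtain ⟨B, hB⟩ := ihv
    exact ⟨A + B, fun p x => (abs_add_le _ _).trans (add_le_add (hA p x) (hB p x))⟩
  | mul _ _ ihu ihv =>
    obtain ⟨A, hA⟩ := ihu
    obtain ⟨B, hB⟩ := ihv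
    refine ⟨A * B, fun p x => ?_⟩
    rw [abs_mul]
    exact mul_le_mul (hA p x) (hB p x) (abs_nonneg _) ((abs_nonneg _).trans (hA p x))

/-- If the generators have derivative `r p` times a good family, so does every good family. -/
theorem Good.deriv {P : Type} {s c w : P → ℝ → ℝ} (r : P → ℝ)
    (hs : ∃ v, Good s c w v ∧ ∀ p x, HasDerivAt (s p) (r p * v p x) x)
    (hc : ∃ v, Good s c w v ∧ ∀ p x, HasDerivAt (c p) (r p * v p x) x)
    (hw : ∃ v, Good s c w v ∧ ∀ p x, HasDerivAt (w p) (r p * v p x) x)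
    {u : P → ℝ → ℝ} (hu : Good s c w u) :
    ∃ v, Good s c w v ∧ ∀ p x, HasDerivAt (u p) (r p * v p x) x := by
  induction hu with
  | sin => exact hs
  | cos => exact hc
  | inv => exact hw
  | const k K hk =>
    refine ⟨fun _ _ => 0, .const _ 0 (by simp), fun p x => ?_⟩
    simpa using hasDerivAt_const x (k p)
  | add _ _ ihu ihv =>
    obtain ⟨u', gu, hu⟩ := ihu
    obtain ⟨v', gv, hv⟩ := ihv
    refine ⟨_, gu.add gv, fun p x => ?_⟩
    exact ((hu p x).add (hv p x)).congr_deriv (by ring)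
  | mul gu₀ gv₀ ihu ihv =>
    obtain ⟨u', gu, hu⟩ := ihu
    obtain ⟨v', gv, hv⟩ := ihv
    refine ⟨_, (gu.mul gv₀).add (gu₀.mul gv), fun p x => ?_⟩
    exact ((hu p x).mul (hv p x)).congr_deriv (by ring)

/-- An abstract form of the induction: `h` is a family with `h' = w`,
`w = 1 / (1 + a r (2π cos (2π r h)))` and `|a r| ≤ 1`. -/
theorem iteratedDeriv_eq_good {P : Type} (h : P → ℝ → ℝ) (a r : P → ℝ)
    (har : ∀ p, |a p * r p| ≤ 1)
    (hpos : ∀ p x, 1 + a p * (Real.cos (2 * π * r p * h p x) * (2 * π * r p)) ≠ 0)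
    (hh : ∀ p x, HasDerivAt (h p)
      (1 + a p * (Real.cos (2 * π * r p * h p x) * (2 * π * r p)))⁻¹ x) (m : ℕ) :
    ∃ u, Good (fun p x => Real.sin (2 * π * r p * h p x))
        (fun p x => Real.cos (2 * π * r p * h p x))
        (fun p x => (1 + a p * (Real.cos (2 * π * r p * h p x) * (2 * π * r p)))⁻¹) u ∧
      ∀ p x, iteratedDeriv (m + 2) (h p) x = r p ^ (m + 2) * a p * u p x := by
  set s : P → ℝ → ℝ := fun p x => Real.sin (2 * π * r p * h p x) with hs
  set c : P → ℝ → ℝ := fun p x => Real.cos (2 * π * r p * h p x) with hc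
  set w : P → ℝ → ℝ :=
    fun p x => (1 + a p * (Real.cos (2 * π * r p * h p x) * (2 * π * r p)))⁻¹ with hw
  have dlin : ∀ p x, HasDerivAt (fun x => 2 * π * r p * h p x) (2 * π * r p * w p x) x :=
    fun p x => (hh p x).const_mul _
  have ds : ∀ p x, HasDerivAt (s p) (r p * (2 * π * (c p x * w p x))) x := fun p x =>
    (dlin p x).sin.congr_deriv (by simp only [hc]; ring)
  have dc : ∀ p x, HasDerivAt (c p) (r p * (-(2 * π) * (s p x * w p x))) x := fun p x =>
    (dlin p x).cos.congr_deriv (by simp only [hs]; ring)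
  have dw : ∀ p x, HasDerivAt (w p)
      (r p ^ 2 * a p * (4 * π ^ 2 * (s p x * (w p x * (w p x * w p x))))) x := fun p x => by
    have h1 := ((((dc p x).mul_const (2 * π * r p)).const_mul (a p)).const_add 1).inv (hpos p x)
    refine h1.congr_deriv ?_
    have h2 : w p x = (1 + a p * (c p x * (2 * π * r p)))⁻¹ := rfl
    rw [div_eq_mul_inv, ← inv_pow, ← h2]
    ring
  have g0 : Good s c w (fun p x => 4 * π ^ 2 * (s p x * (w p x * (w p x * w p x)))) :=
    (Good.const (fun _ => 4 * π ^ 2) _ (fun _ => le_rfl)).mul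
      (Good.sin.mul (Good.inv.mul (Good.inv.mul .inv)))
  have hd : ∀ {u : P → ℝ → ℝ}, Good s c w u →
      ∃ v, Good s c w v ∧ ∀ p x, HasDerivAt (u p) (r p * v p x) x := by
    refine fun hu => hu.deriv r ⟨_, ?_, ds⟩ ⟨_, ?_, dc⟩
      ⟨_, (Good.const (fun p => a p * r p) 1 har).mul g0, fun p x => ?_⟩
    · exact (Good.const (fun _ => 2 * π) _ (fun _ => le_rfl)).mul (Good.cos.mul .inv)
    · exact (Good.const (fun _ => -(2 * π)) _ (fun _ => le_rfl)).mul (Good.sin.mul .inv)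
    · exact (dw p x).congr_deriv (by ring)
  induction m with
  | zero =>
    refine ⟨_, g0, fun p x => ?_⟩
    have e : _root_.deriv (h p) = w p := funext fun x => (hh p x).deriv
    rw [iteratedDeriv_succ, zero_add, iteratedDeriv_one, e]
    exact (dw p x).deriv
  | succ m ih =>
    obtain ⟨u, gu, hu⟩ := ih
    obtain ⟨v, gv, hv⟩ := hd gu
    refine ⟨v, gv, fun p x => ?_⟩
    have e : iteratedDeriv (m + 2) (h p) = fun x => r p ^ (m + 2) * a p * u p x :=
      funext (hu p)
    rw [show m + 1 + 2 = (m + 2) + 1 by ring, iteratedDeriv_succ, e,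
      ((hv p x).const_mul _).deriv]
    ring

/-- When `4π a n ≤ 1` the derivative of `g` stays above `1/2`. -/
theorem half_le_one_add {a r : ℝ} (har : 0 ≤ a * r) (har' : 4 * π * (a * r) ≤ 1) (t : ℝ) :
    1 / 2 ≤ 1 + a * (Real.cos t * (2 * π * r)) := by
  have h1 := Real.neg_one_le_cos t
  have h2 : 0 ≤ 2 * π * (a * r) := by positivity
  nlinarith

/-- The derivative of `g⁻¹`; since `g` is bijective, `Function.invFun` is the true inverse. -/
theorem hasDerivAt_invFun_gA (ι : ℕ) (ν β : ℝ) (n : ℕ)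
    (hn : 4 * π * (((n : ℝ) ^ ((ι : ℝ) - ν))⁻¹ * n) ≤ 1) (x : ℝ) :
    HasDerivAt (Function.invFun (gA ι ν β n))
      (1 + ((n : ℝ) ^ ((ι : ℝ) - ν))⁻¹ *
        (Real.cos (2 * π * n * Function.invFun (gA ι ν β n) x) * (2 * π * n)))⁻¹ x := by
  set a := ((n : ℝ) ^ ((ι : ℝ) - ν))⁻¹ with ha
  have ha0 : 0 ≤ a := by positivity
  have hdg : ∀ y, HasDerivAt (gA ι ν β n) (1 + a * (Real.cos (2 * π * n * y) * (2 * π * n))) y := by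
    intro y
    have h1 : HasDerivAt (fun y : ℝ => 2 * π * n * y) (2 * π * n) y := by
      simpa using (hasDerivAt_id y).const_mul (2 * π * (n : ℝ))
    exact ((hasDerivAt_id y).add_const β).add (h1.sin.const_mul a)
  have hpos : ∀ y, 1 / 2 ≤ 1 + a * (Real.cos (2 * π * n * y) * (2 * π * n)) :=
    fun y => half_le_one_add (by positivity) hn _
  have hmono : StrictMono (gA ι ν β n) := strictMono_of_deriv_pos fun y => by
    rw [(hdg y).deriv]
    linarith [hpos y]
  have hcont : Continuous (gA ι ν β n) :=
    continuous_iff_continuousAt.2 fun y => (hdg y).continuousAt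
  have hlow : ∀ y, y + (β - a) ≤ gA ι ν β n y := fun y => by
    simp only [gA, ← ha]
    nlinarith [Real.neg_one_le_sin (2 * π * n * y)]
  have hupp : ∀ y, gA ι ν β n y ≤ y + (β + a) := fun y => by
    simp only [gA, ← ha]
    nlinarith [Real.sin_le_one (2 * π * n * y)]
  have hsurj : Function.Surjective (gA ι ν β n) := hcont.surjective
    (tendsto_atTop_mono hlow (tendsto_atTop_add_const_right _ _ tendsto_id))
    (tendsto_atBot_mono hupp (tendsto_atBot_add_const_right _ _ tendsto_id))
  have hright : Function.RightInverse (Function.invFun (gA ι ν β n)) (gA ι ν β n) :=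
    Function.rightInverse_invFun hsurj
  have hleft : Function.LeftInverse (Function.invFun (gA ι ν β n)) (gA ι ν β n) :=
    Function.leftInverse_invFun hmono.injective
  have hinvmono : Monotone (Function.invFun (gA ι ν β n)) := fun y z hyz => by
    rw [← hmono.le_iff_le, hright y, hright z]
    exact hyz
  have hinvcont : Continuous (Function.invFun (gA ι ν β n)) :=
    hinvmono.continuous_of_surjective hleft.surjective
  refine HasDerivAt.of_local_left_inverse hinvcont.continuousAt (hdg _) ?_
    (Eventually.of_forall hright)
  linarith [hpos (Function.invFun (gA ι ν β n) x)]

theorem stmt_9 (ι : ℕ) (hι : 2 ≤ ι) (ν : ℝ) (hν : ν ∈ Set.Ioo (0:ℝ) (1/2))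
    (m : ℕ) (hm : 2 ≤ m) :
    ∃ (C : ℝ) (N : ℕ), 0 < C ∧ ∀ n : ℕ, N ≤ n →
      (n : ℝ) ^ ((ι : ℝ) - ν - 1) > 2 * π ∧
      ∀ (β x : ℝ),
        |iteratedDeriv m (Function.invFun (gA ι ν β n)) x| ≤
          C * (n : ℝ) ^ ((m : ℝ) - ((ι : ℝ) - ν)) := by
  obtain ⟨hν0, hν1⟩ := hν
  have hι' : (2 : ℝ) ≤ ι := by exact_mod_cast hι
  have hlim : Tendsto (fun n : ℕ => (n : ℝ) ^ ((ι : ℝ) - ν - 1)) atTop atTop :=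
    (tendsto_rpow_atTop (by linarith)).comp tendsto_natCast_atTop_atTop
  obtain ⟨N, hN⟩ := eventually_atTop.1
    ((hlim.eventually_ge_atTop (4 * π)).and (eventually_ge_atTop 1))
  have hpi := Real.pi_gt_three
  have hn0 : ∀ n, N ≤ n → (0 : ℝ) < n := fun n hn => by exact_mod_cast (hN n hn).2
  have hsmall : ∀ n : ℕ, N ≤ n → 4 * π * (((n : ℝ) ^ ((ι : ℝ) - ν))⁻¹ * n) ≤ 1 := by
    intro n hn
    have h0 := hn0 n hn
    have h1 := (hN n hn).1
    have e : ((n : ℝ) ^ ((ι : ℝ) - ν))⁻¹ * n = ((n : ℝ) ^ ((ι : ℝ) - ν - 1))⁻¹ := by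
      rw [Real.rpow_sub_one h0.ne', inv_div, div_eq_mul_inv, mul_comm]
    rw [e, ← div_eq_mul_inv]
    exact div_le_one_of_le₀ h1 (by positivity)
  obtain ⟨k, rfl⟩ := Nat.exists_eq_add_of_le' hm
  let P := {p : ℕ × ℝ // N ≤ p.1}
  let h : P → ℝ → ℝ := fun p => Function.invFun (gA ι ν p.1.2 p.1.1)
  let a : P → ℝ := fun p => ((p.1.1 : ℝ) ^ ((ι : ℝ) - ν))⁻¹
  let r : P → ℝ := fun p => p.1.1
  have har0 : ∀ p, 0 ≤ a p * r p := fun p => by positivity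
  have hhalf : ∀ p x, 1 / 2 ≤ 1 + a p * (Real.cos (2 * π * r p * h p x) * (2 * π * r p)) :=
    fun p x => half_le_one_add (har0 p) (hsmall p.1.1 p.2) _
  obtain ⟨u, gu, hu⟩ := iteratedDeriv_eq_good h a r
    (fun p => by
      rw [abs_of_nonneg (har0 p)]
      have : 4 * π * (a p * r p) ≤ 1 := hsmall p.1.1 p.2
      nlinarith [har0 p])
    (fun p x => by linarith [hhalf p x])
    (fun p x => hasDerivAt_invFun_gA ι ν p.1.2 p.1.1 (hsmall p.1.1 p.2) x) k
  obtain ⟨C, hC⟩ := gu.bounded (fun _ _ => Real.abs_sin_le_one _) (fun _ _ => Real.abs_cos_le_one _)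
    (fun p x => by
      have h1 := hhalf p x
      rw [abs_of_nonneg (inv_nonneg.2 (by linarith))]
      exact inv_le_of_inv_le₀ (by norm_num) (by linarith))
  -- `C` may vanish, so it is enlarged to a positive constant.
  refine ⟨|C| + 1, N, by positivity, fun n hn => ⟨by linarith [(hN n hn).1], fun β x => ?_⟩⟩
  have h0 := hn0 n hn
  have e : (n : ℝ) ^ (((k + 2 : ℕ) : ℝ) - ((ι : ℝ) - ν)) =
      (n : ℝ) ^ (k + 2) * ((n : ℝ) ^ ((ι : ℝ) - ν))⁻¹ := by
    rw [Real.rpow_sub h0, Real.rpow_natCast, div_eq_mul_inv]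
  have h1 : iteratedDeriv (k + 2) (Function.invFun (gA ι ν β n)) x =
      (n : ℝ) ^ (k + 2) * ((n : ℝ) ^ ((ι : ℝ) - ν))⁻¹ * u ⟨(n, β), hn⟩ x := hu ⟨(n, β), hn⟩ x
  rw [h1, e, abs_mul, abs_of_nonneg (a := (n : ℝ) ^ (k + 2) * _) (by positivity), mul_comm]
  gcongr
  linarith [hC ⟨(n, β), hn⟩ x, le_abs_self C]
end
end

section
/- Fix an integer ι ≥ 2, ν ∈ (0,1/2), and an integer m ≥ 2. There exist C > 0 and N ∈ ℕ such that for all n ≥ N (so that n^{ι−ν−1} > 2π), all β ∈ ℝ, and all x ∈ ℝ: | (g_{β,n}^{−1})^{(m)}(x) + (2π)^m n^{m−(ι−ν)} sin(2πn g_{β,n}^{−1}(x) + mπ/2) · ((g_{β,n}^{−1})'(x))^{m+1} | ≤ C n^{m+1−2(ι−ν)}. -/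
/-!
Write `ε = n^{-(ι-ν)}`, `ω = 2πn`, `δ = εω`, `h = g⁻¹` and `u = h'`. Differentiating `g (h x) = x` gives
`u = 1 / (1 + δ cos (ω h))`, so `(h, u)` solves the autonomous system
`h' = u`, `u' = ω δ sin (ω h) u ^ 3`.

Hence differentiating an expression built from constants, `δ`, `sin (ω h + a)` and `u` by sums and
products gives `ω` times an expression of the same kind (`TrigExpr.deriv`), and all such
expressions are bounded uniformly for `|δ| ≤ 1/2`, `|u| ≤ 2` (`TrigExpr.bounded`). Induction on `m ≥ 2`,
starting from `h'' = ω δ sin (ω h) u ^ 3`, yields the exact formula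
`h^{(m)} = -ε ω^m sin (ω h + mπ/2) u^{m+1} + ε² ω^{m+1} Q_m (δ, ω h, u)`
with `Q_m` such an expression depending on `m` only (`iteratedDeriv_expansion`). The error bound
follows since `ε² ω^{m+1} = (2π)^{m+1} n^{m+1-2(ι-ν)}`.
-/

open Real Filter Set

noncomputable section

/-- Functions of `(δ, θ, u)` generated under sums and products by the constants, `δ`, the shifted
sines `sin (θ + a)` and `u`. -/
inductive TrigExpr : (ℝ → ℝ → ℝ → ℝ) → Prop
  | const (c : ℝ) : TrigExpr (fun _ _ _ => c)
  | delta : TrigExpr (fun d _ _ => d)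
  | sine (a : ℝ) : TrigExpr (fun _ t _ => Real.sin (t + a))
  | slope : TrigExpr (fun _ _ u => u)
  | sum {F G : ℝ → ℝ → ℝ → ℝ} : TrigExpr F → TrigExpr G →
      TrigExpr (fun d t u => F d t u + G d t u)
  | prod {F G : ℝ → ℝ → ℝ → ℝ} : TrigExpr F → TrigExpr G →
      TrigExpr (fun d t u => F d t u * G d t u)

theorem TrigExpr.power {F : ℝ → ℝ → ℝ → ℝ} (hF : TrigExpr F) (k : ℕ) :
    TrigExpr (fun d t u => F d t u ^ k) := by
  induction k with
  | zero => simpa using TrigExpr.const 1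
  | succ k ih => simpa only [pow_succ] using ih.prod hF

theorem TrigExpr.bounded {F : ℝ → ℝ → ℝ → ℝ} (hF : TrigExpr F) :
    ∃ C : ℝ, 0 ≤ C ∧ ∀ d t u : ℝ, |d| ≤ 1 / 2 → |u| ≤ 2 → |F d t u| ≤ C := by
  induction hF with
  | const c => exact ⟨|c|, abs_nonneg c, fun _ _ _ _ _ => le_rfl⟩
  | delta => exact ⟨1 / 2, by norm_num, fun _ _ _ h _ => h⟩
  | sine a => exact ⟨1, by norm_num, fun _ _ _ _ _ => Real.abs_sin_le_one _⟩
  | slope => exact ⟨2, by norm_num, fun _ _ _ _ h => h⟩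
  | sum _ _ ihF ihG =>
    obtain ⟨A, hA, hA'⟩ := ihF
    obtain ⟨B, hB, hB'⟩ := ihG
    exact ⟨A + B, by positivity, fun d t u hd hu =>
      (abs_add_le _ _).trans (add_le_add (hA' d t u hd hu) (hB' d t u hd hu))⟩
  | prod _ _ ihF ihG =>
    obtain ⟨A, hA, hA'⟩ := ihF
    obtain ⟨B, hB, hB'⟩ := ihG
    refine ⟨A * B, by positivity, fun d t u hd hu => ?_⟩
    rw [abs_mul]
    exact mul_le_mul (hA' d t u hd hu) (hB' d t u hd hu) (abs_nonneg _) hA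

/-- The autonomous system satisfied by `h = g⁻¹` and `u = h'`, with `ω` the frequency and
`d` the product of the amplitude and the frequency. -/
def InvSystem (ω d : ℝ) (h u : ℝ → ℝ) : Prop :=
  ∀ x, HasDerivAt h (u x) x ∧ HasDerivAt u (ω * (d * Real.sin (ω * h x) * u x ^ 3)) x

/-- Along solutions of the system, differentiation maps trigonometric expressions to `ω` times
trigonometric expressions; the new expression does not depend on `ω`, `d` or the solution. -/
theorem TrigExpr.deriv {F : ℝ → ℝ → ℝ → ℝ} (hF : TrigExpr F) :
    ∃ G, TrigExpr G ∧ ∀ (ω d : ℝ) (h u : ℝ → ℝ), InvSystem ω d h u → ∀ x,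
      HasDerivAt (fun y => F d (ω * h y) (u y)) (ω * G d (ω * h x) (u x)) x := by
  induction hF with
  | const c =>
    refine ⟨_, .const 0, fun ω d h u _ x => ?_⟩
    simpa using hasDerivAt_const x c
  | delta =>
    refine ⟨_, .const 0, fun ω d h u _ x => ?_⟩
    simpa using hasDerivAt_const x d
  | sine a =>
    refine ⟨_, (TrigExpr.sine (a + π / 2)).prod .slope, fun ω d h u hs x => ?_⟩
    have := (((hs x).1.const_mul ω).add_const a).sin
    refine this.congr_deriv ?_
    rw [← add_assoc, Real.sin_add_pi_div_two]
    ring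
  | slope =>
    refine ⟨_, (TrigExpr.delta.prod (.sine 0)).prod (TrigExpr.slope.power 3),
      fun ω d h u hs x => ?_⟩
    simpa using (hs x).2
  | sum hF hG ihF ihG =>
    obtain ⟨A, hA, hA'⟩ := ihF
    obtain ⟨B, hB, hB'⟩ := ihG
    refine ⟨_, hA.sum hB, fun ω d h u hs x => ?_⟩
    rw [mul_add]
    exact (hA' ω d h u hs x).fun_add (hB' ω d h u hs x)
  | prod hF hG ihF ihG =>
    obtain ⟨A, hA, hA'⟩ := ihF
    obtain ⟨B, hB, hB'⟩ := ihG
    refine ⟨_, (hA.prod hG).sum (hF.prod hB), fun ω d h u hs x => ?_⟩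
    refine ((hA' ω d h u hs x).fun_mul (hB' ω d h u hs x)).congr_deriv ?_
    ring

/-- Exact expansion of the `m`-th derivative of a solution: the leading term plus a remainder with
prefactor `ε² ω^{m+1}`. The new remainder created at each step comes from differentiating
`u^{m+1}` in the leading term. -/
theorem iteratedDeriv_expansion (m : ℕ) (hm : 2 ≤ m) :
    ∃ Q, TrigExpr Q ∧ ∀ (ε ω : ℝ) (h u : ℝ → ℝ), InvSystem ω (ε * ω) h u → ∀ x,
      iteratedDeriv m h x = -(ε * ω ^ m * Real.sin (ω * h x + m * π / 2) * u x ^ (m + 1)) +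
        ε ^ 2 * ω ^ (m + 1) * Q (ε * ω) (ω * h x) (u x) := by
  induction m, hm using Nat.le_induction with
  | base =>
    refine ⟨_, .const 0, fun ε ω h u hs x => ?_⟩
    have h1 : deriv h = u := funext fun y => (hs y).1.deriv
    rw [iteratedDeriv_succ, iteratedDeriv_one, h1, (hs x).2.deriv]
    have : ω * h x + ((2 : ℕ) : ℝ) * π / 2 = ω * h x + π := by push_cast; ring
    rw [this, Real.sin_add_pi]
    ring
  | succ m hm ih =>
    obtain ⟨Q, hQ, hQ'⟩ := ih
    obtain ⟨G, hG, hG'⟩ := hQ.deriv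
    refine ⟨_, hG.sum ((TrigExpr.const (-(m + 1))).prod
      (((TrigExpr.sine (m * π / 2)).prod (.sine 0)).prod (TrigExpr.slope.power (m + 3)))),
      fun ε ω h u hs x => ?_⟩
    rw [iteratedDeriv_succ, funext (hQ' ε ω h u hs)]
    have hsin := (((hs x).1.const_mul ω).add_const (m * π / 2)).sin
    have hpow := (hs x).2.fun_pow (m + 1)
    have hlead := ((hsin.const_mul (ε * ω ^ m)).fun_mul hpow).fun_neg
    have hrem := (hG' ω (ε * ω) h u hs x).const_mul (ε ^ 2 * ω ^ (m + 1))
    rw [(hlead.fun_add hrem).deriv]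
    have : ω * h x + ((m + 1 : ℕ) : ℝ) * π / 2 = ω * h x + m * π / 2 + π / 2 := by
      push_cast; ring
    rw [this, Real.sin_add_pi_div_two]
    simp only [add_zero, Nat.add_sub_cancel]
    push_cast
    ring

/-- The inverse of `y ↦ y + β + ε sin (ω y)` solves the system, and its slope is at most `2`
as soon as `|εω| ≤ 1/2`. -/
theorem invFun_system (ε ω β : ℝ) (hd : |ε * ω| ≤ 1 / 2) (g : ℝ → ℝ)
    (hg : g = fun y => y + β + ε * Real.sin (ω * y)) :
    InvSystem ω (ε * ω) (Function.invFun g) (deriv (Function.invFun g)) ∧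
      ∀ x, |deriv (Function.invFun g) x| ≤ 2 := by
  have hder : ∀ y, HasDerivAt g (1 + ε * ω * Real.cos (ω * y)) y := by
    intro y
    rw [hg]
    refine (((hasDerivAt_id' y).add_const β).fun_add
      ((((hasDerivAt_id' y).const_mul ω).sin).const_mul ε)).congr_deriv ?_
    ring
  have hlow : ∀ y, 1 / 2 ≤ 1 + ε * ω * Real.cos (ω * y) := by
    intro y
    have h1 : |ε * ω * Real.cos (ω * y)| ≤ 1 / 2 := by
      rw [abs_mul]
      exact (mul_le_of_le_one_right (abs_nonneg _) (Real.abs_cos_le_one _)).trans hd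
    linarith [(abs_le.1 h1).1]
  have hpos : ∀ y, 0 < 1 + ε * ω * Real.cos (ω * y) := fun y => by linarith [hlow y]
  have hcont : Continuous g := continuous_iff_continuousAt.2 fun y => (hder y).continuousAt
  have hmono : StrictMono g := strictMono_of_deriv_pos fun y => by
    rw [(hder y).deriv]; exact hpos y
  have hsinb : ∀ y, |ε * Real.sin (ω * y)| ≤ |ε| := fun y => by
    rw [abs_mul]
    exact mul_le_of_le_one_right (abs_nonneg _) (Real.abs_sin_le_one _)
  have hsurj : Function.Surjective g := by
    refine hcont.surjective ?_ ?_
    · refine tendsto_atTop_mono (f := fun y => y + (β - |ε|)) (fun y => ?_)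
        (tendsto_atTop_add_const_right _ _ tendsto_id)
      rw [hg]
      linarith [(abs_le.1 (hsinb y)).1]
    · refine tendsto_atBot_mono (g := g) (f := fun y => y + (β + |ε|)) (fun y => ?_)
        (tendsto_atBot_add_const_right _ _ tendsto_id)
      rw [hg]
      linarith [(abs_le.1 (hsinb y)).2]
  set h := Function.invFun g with hh
  have hright : ∀ x, g (h x) = x := Function.rightInverse_invFun hsurj
  have hcont' : Continuous h := by
    have : h = (hmono.orderIsoOfSurjective g hsurj).symm := by
      funext x
      rw [OrderIso.eq_symm_apply]
      exact hright x
    rw [this]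
    exact OrderIso.continuous _
  have hdh : ∀ x, HasDerivAt h (1 + ε * ω * Real.cos (ω * h x))⁻¹ x := fun x =>
    (hder (h x)).of_local_left_inverse hcont'.continuousAt (hpos _).ne'
      (Eventually.of_forall hright)
  have hu : deriv h = fun x => (1 + ε * ω * Real.cos (ω * h x))⁻¹ :=
    funext fun x => (hdh x).deriv
  rw [hu]
  refine ⟨fun x => ⟨hdh x, ?_⟩, fun x => ?_⟩
  · have h1 := ((((hdh x).const_mul ω).cos.const_mul (ε * ω)).const_add 1).fun_inv
      (hpos (h x)).ne'
    refine h1.congr_deriv ?_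
    have := (hpos (h x)).ne'
    field_simp
  · rw [abs_of_pos (inv_pos.2 (hpos _))]
    exact (inv_anti₀ (by norm_num) (hlow (h x))).trans (by norm_num)

theorem stmt_10 (ι : ℕ) (hι : 2 ≤ ι) (ν : ℝ) (hν : ν ∈ Set.Ioo (0:ℝ) (1/2))
    (m : ℕ) (hm : 2 ≤ m) :
    ∃ (C : ℝ) (N : ℕ), 0 < C ∧ ∀ n : ℕ, N ≤ n →
      (n : ℝ) ^ ((ι : ℝ) - ν - 1) > 2 * π ∧
      ∀ (β x : ℝ),
        abs (iteratedDeriv m (Function.invFun (gA ι ν β n)) x +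
          (2 * π) ^ m * (n : ℝ) ^ ((m : ℝ) - ((ι : ℝ) - ν)) *
            Real.sin (2 * π * n * Function.invFun (gA ι ν β n) x + m * π / 2) *
            (deriv (Function.invFun (gA ι ν β n)) x) ^ (m + 1)) ≤
          C * (n : ℝ) ^ ((m : ℝ) + 1 - 2 * ((ι : ℝ) - ν)) := by
  obtain ⟨Q, hQ, hexp⟩ := iteratedDeriv_expansion m hm
  obtain ⟨K, hK, hbound⟩ := hQ.bounded
  have hs : 0 < (ι : ℝ) - ν - 1 := by
    have : (2 : ℝ) ≤ ι := by exact_mod_cast hι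
    linarith [hν.2]
  obtain ⟨N, hN⟩ := eventually_atTop.1 (((tendsto_rpow_atTop hs).comp
    tendsto_natCast_atTop_atTop).eventually_ge_atTop (4 * π))
  -- The `+ 1` keeps the constant positive even when the remainder bound `K` vanishes.
  refine ⟨(2 * π) ^ (m + 1) * (K + 1), max N 1, by positivity, fun n hn => ?_⟩
  have hn4 : 4 * π ≤ (n : ℝ) ^ ((ι : ℝ) - ν - 1) := hN n ((le_max_left _ _).trans hn)
  have hn0 : (0 : ℝ) < n := by exact_mod_cast (le_max_right N 1).trans hn
  refine ⟨by linarith [Real.pi_pos], fun β x => ?_⟩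
  set ε : ℝ := ((n : ℝ) ^ ((ι : ℝ) - ν))⁻¹ with hε
  have hd : |ε * (2 * π * n)| ≤ 1 / 2 := by
    have h1 : (n : ℝ) ^ ((ι : ℝ) - ν) = (n : ℝ) ^ ((ι : ℝ) - ν - 1) * n := by
      rw [Real.rpow_sub_one hn0.ne']
      field_simp
    rw [abs_of_nonneg (by positivity), hε, h1, inv_mul_eq_div, div_le_iff₀ (by positivity)]
    nlinarith
  obtain ⟨hsys, hslope⟩ := invFun_system ε (2 * π * n) β hd (gA ι ν β n) rfl
  have hlead : (2 * π) ^ m * (n : ℝ) ^ ((m : ℝ) - ((ι : ℝ) - ν)) = ε * (2 * π * n) ^ m := by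
    rw [Real.rpow_sub hn0, Real.rpow_natCast, mul_pow, hε]
    ring
  have hrem : (2 * π) ^ (m + 1) * (n : ℝ) ^ ((m : ℝ) + 1 - 2 * ((ι : ℝ) - ν)) =
      ε ^ 2 * (2 * π * n) ^ (m + 1) := by
    have h1 : (n : ℝ) ^ ((m : ℝ) + 1) = (n : ℝ) ^ (m + 1) := by
      rw [← Real.rpow_natCast]; push_cast; rfl
    have h2 : (n : ℝ) ^ (2 * ((ι : ℝ) - ν)) = ((n : ℝ) ^ ((ι : ℝ) - ν)) ^ 2 := by
      rw [mul_comm, Real.rpow_mul hn0.le, Real.rpow_two]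
    rw [Real.rpow_sub hn0, h1, h2, mul_pow _ (n : ℝ), hε]
    ring
  rw [hexp ε (2 * π * n) _ _ hsys x, hlead, neg_add_eq_sub, sub_add_cancel, abs_mul,
    mul_right_comm ((2 * π) ^ (m + 1)), hrem, abs_of_nonneg (by positivity : 0 ≤ ε ^ 2 * (2 * π * (n : ℝ)) ^ (m + 1))]
  exact mul_le_mul_of_nonneg_left ((hbound _ _ _ hd (hslope x)).trans (by linarith))
    (by positivity)
end
end

section
/- Fix an integer ι ≥ 2, ν ∈ (0,1/2), and an integer m with 2 ≤ m ≤ ι. There exist C > 0 and N ∈ ℕ such that for all n ≥ N (so that n^{ι−ν−1} > 2π), all β ∈ ℝ, and all x ∈ ℝ: | φ_{β,n}^{(m)}(x) − (2π)^m n^{m−(ι−ν)} [ sin(2πnx + mπ/2) − sin(2πn g_{β,n}^{−1}(x) + mπ/2) · ((g_{β,n}^{−1})'(x))^m ] | ≤ C n^{−(ι−m+1−2ν)}. -/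
open Real Filter Set

noncomputable section

/-- `φ_{β,n}(x) = g_{β,n}(x) + g_{β,n}^{-1}(x) - 2x`. -/
def φA (ι : ℕ) (ν β : ℝ) (n : ℕ) : ℝ → ℝ :=
  fun x => gA ι ν β n x + Function.invFun (gA ι ν β n) x - 2 * x

/-!
Write `k = 2πn`, `a = n^{-(ι-ν)}`, `ε = a k`, and let `h` be the inverse of `g`. With
`w = 1 / (1 + ε cos (k h))` one has `h' = w`, and along `h` the derivatives of `cos (k h)`,
`sin (k h)` and `w` are `k` times polynomials in `ε, cos (k h), sin (k h), w`. By induction on `m ≥ 2`,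
`h^{(m)} = k^{m-1} (-ε sin (k h + mπ/2) w^m + ε² R_m)` with `R_m` such a polynomial, independent of
`n` and `β` (`exists_remainder`). The polynomials are modelled by the inductive class `TrigPoly`, whose
members are bounded uniformly for `0 ≤ ε ≤ 1/2` (`TrigPoly.bounded`) and which is closed under
differentiation in the angle (`TrigPoly.hasDeriv`). The error is therefore `O(k^{m-1} ε²)`, of order
`n^{m+1-2ι+2ν}`, and `ι ≥ 2` turns this into the claimed `n^{-(ι-m+1-2ν)}`.
-/

/-- The derivative of the inverse map, in terms of the angle `θ = k h(x)`. -/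
def wA (ε θ : ℝ) : ℝ := (1 + ε * cos θ)⁻¹

/-- Functions of `(ε, θ)` that are polynomials in `ε`, `cos θ`, `sin θ` and `wA ε θ`. -/
inductive TrigPoly : (ℝ → ℝ → ℝ) → Prop
  | const (c : ℝ) : TrigPoly (fun _ _ => c)
  | eps : TrigPoly (fun ε _ => ε)
  | cos : TrigPoly (fun _ θ => Real.cos θ)
  | sin : TrigPoly (fun _ θ => Real.sin θ)
  | w : TrigPoly wA
  | add {f g : ℝ → ℝ → ℝ} : TrigPoly f → TrigPoly g → TrigPoly (fun ε θ => f ε θ + g ε θ)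
  | mul {f g : ℝ → ℝ → ℝ} : TrigPoly f → TrigPoly g → TrigPoly (fun ε θ => f ε θ * g ε θ)

lemma half_le_one_add_s11 {ε : ℝ} (h0 : 0 ≤ ε) (h1 : ε ≤ 1 / 2) (θ : ℝ) :
    1 / 2 ≤ 1 + ε * Real.cos θ := by
  nlinarith [Real.neg_one_le_cos θ]

lemma TrigPoly.pow {f : ℝ → ℝ → ℝ} (hf : TrigPoly f) (m : ℕ) :
    TrigPoly (fun ε θ => f ε θ ^ m) := by
  induction m with
  | zero => simpa using TrigPoly.const 1
  | succ m ih => simpa only [pow_succ] using ih.mul hf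

lemma TrigPoly.sin_add (b : ℝ) : TrigPoly (fun _ θ => Real.sin (θ + b)) := by
  simp only [Real.sin_add]
  exact (TrigPoly.sin.mul (.const _)).add (TrigPoly.cos.mul (.const _))

lemma TrigPoly.bounded {f : ℝ → ℝ → ℝ} (hf : TrigPoly f) :
    ∃ B : ℝ, ∀ ε θ : ℝ, 0 ≤ ε → ε ≤ 1 / 2 → |f ε θ| ≤ B := by
  induction hf with
  | const c => exact ⟨|c|, fun _ _ _ _ => le_rfl⟩
  | eps => exact ⟨1 / 2, fun ε _ h0 h1 => by rwa [abs_of_nonneg h0]⟩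
  | cos => exact ⟨1, fun _ θ _ _ => abs_cos_le_one θ⟩
  | sin => exact ⟨1, fun _ θ _ _ => abs_sin_le_one θ⟩
  | w =>
    refine ⟨2, fun ε θ h0 h1 => ?_⟩
    have h := half_le_one_add_s11 h0 h1 θ
    rw [wA, abs_inv, abs_of_pos (by linarith)]
    exact inv_le_of_inv_le₀ (by norm_num) (by linarith)
  | add _ _ ihf ihg =>
    obtain ⟨A, hA⟩ := ihf
    obtain ⟨B, hB⟩ := ihg
    exact ⟨A + B, fun ε θ h0 h1 =>
      (abs_add_le _ _).trans (add_le_add (hA ε θ h0 h1) (hB ε θ h0 h1))⟩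
  | mul _ _ ihf ihg =>
    obtain ⟨A, hA⟩ := ihf
    obtain ⟨B, hB⟩ := ihg
    refine ⟨A * B, fun ε θ h0 h1 => ?_⟩
    rw [abs_mul]
    exact mul_le_mul (hA ε θ h0 h1) (hB ε θ h0 h1) (abs_nonneg _)
      ((abs_nonneg _).trans (hA ε θ h0 h1))

lemma hasDerivAt_wA {ε : ℝ} (h0 : 0 ≤ ε) (h1 : ε ≤ 1 / 2) (θ : ℝ) :
    HasDerivAt (wA ε) (ε * Real.sin θ * wA ε θ ^ 2) θ := by
  have h := half_le_one_add_s11 h0 h1 θ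
  have h2 : HasDerivAt (fun θ => 1 + ε * Real.cos θ) (ε * -Real.sin θ) θ :=
    ((Real.hasDerivAt_cos θ).const_mul ε).const_add 1
  have h3 := h2.fun_inv (by linarith)
  refine h3.congr_deriv ?_
  simp only [wA]
  rw [inv_pow, div_eq_mul_inv]
  ring

lemma TrigPoly.hasDeriv {f : ℝ → ℝ → ℝ} (hf : TrigPoly f) :
    ∃ f' : ℝ → ℝ → ℝ, TrigPoly f' ∧
      ∀ ε θ : ℝ, 0 ≤ ε → ε ≤ 1 / 2 → HasDerivAt (f ε) (f' ε θ) θ := by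
  induction hf with
  | const c => exact ⟨_, .const 0, fun ε θ _ _ => hasDerivAt_const θ c⟩
  | eps => exact ⟨_, .const 0, fun ε θ _ _ => hasDerivAt_const θ ε⟩
  | cos =>
    refine ⟨_, (TrigPoly.const (-1)).mul .sin, fun ε θ _ _ => ?_⟩
    exact (Real.hasDerivAt_cos θ).congr_deriv (by ring)
  | sin => exact ⟨_, .cos, fun ε θ _ _ => Real.hasDerivAt_sin θ⟩
  | w => exact ⟨_, (TrigPoly.eps.mul .sin).mul (TrigPoly.w.pow 2),
      fun ε θ h0 h1 => hasDerivAt_wA h0 h1 θ⟩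
  | add hf hg ihf ihg =>
    obtain ⟨f', hf', hf''⟩ := ihf
    obtain ⟨g', hg', hg''⟩ := ihg
    exact ⟨_, hf'.add hg', fun ε θ h0 h1 => (hf'' ε θ h0 h1).add (hg'' ε θ h0 h1)⟩
  | mul hf hg ihf ihg =>
    obtain ⟨f', hf', hf''⟩ := ihf
    obtain ⟨g', hg', hg''⟩ := ihg
    exact ⟨_, (hf'.mul hg).add (hf.mul hg'),
      fun ε θ h0 h1 => (hf'' ε θ h0 h1).mul (hg'' ε θ h0 h1)⟩

/-- The derivatives of `x + β + a sin (k x) + h x - 2 x`, of order at least two, when `h' = w` and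
`ε = a k`: the remainder `R` depends on the order only. -/
lemma exists_remainder (m : ℕ) :
    ∃ R : ℝ → ℝ → ℝ, TrigPoly R ∧ ∀ (ε k a β : ℝ) (h : ℝ → ℝ), 0 ≤ ε → ε ≤ 1 / 2 → ε = a * k →
      (∀ x, HasDerivAt h (wA ε (k * h x)) x) →
      iteratedDeriv (m + 2) (fun x => x + β + a * Real.sin (k * x) + h x - 2 * x) = fun x =>
        k ^ (m + 1) * (ε * Real.sin (k * x + (m + 2 : ℕ) * π / 2)
          - ε * Real.sin (k * h x + (m + 2 : ℕ) * π / 2) * wA ε (k * h x) ^ (m + 2)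
          + ε ^ 2 * R ε (k * h x)) := by
  induction m with
  | zero =>
    refine ⟨fun ε θ => -1 * (Real.sin θ * Real.cos θ * wA ε θ ^ 3),
      (TrigPoly.const (-1)).mul ((TrigPoly.sin.mul .cos).mul (TrigPoly.w.pow 3)), ?_⟩
    intro ε k a β h h0 h1 hε hh
    have hd1 : deriv (fun x => x + β + a * Real.sin (k * x) + h x - 2 * x) =
        fun x => 1 + ε * Real.cos (k * x) + wA ε (k * h x) - 2 := by
      funext x
      have hk : HasDerivAt (fun x => k * x) k x := by
        simpa using (hasDerivAt_id x).const_mul k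
      have h2 : HasDerivAt (fun x : ℝ => 2 * x) 2 x := by
        simpa using (hasDerivAt_id x).const_mul (2 : ℝ)
      have := (((((hasDerivAt_id' x).add_const β).add (hk.sin.const_mul a)).add (hh x)).sub h2)
      refine (this.congr_deriv ?_).deriv
      rw [hε]; ring
    rw [zero_add, iteratedDeriv_succ, iteratedDeriv_one, hd1]
    funext x
    have hk : HasDerivAt (fun x => k * x) k x := by
      simpa using (hasDerivAt_id x).const_mul k
    have hw := (hasDerivAt_wA h0 h1 (k * h x)).comp x ((hh x).const_mul k)
    have := (((hk.cos.const_mul ε).const_add 1).add hw).sub_const 2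
    refine (this.congr_deriv ?_).deriv
    have e : ((2 : ℕ) : ℝ) * π / 2 = π := by push_cast; ring
    rw [e, Real.sin_add_pi, Real.sin_add_pi]
    have hw1 : wA ε (k * h x) = 1 - ε * Real.cos (k * h x) * wA ε (k * h x) := by
      have := half_le_one_add_s11 h0 h1 (k * h x)
      have h3 : wA ε (k * h x) * (1 + ε * Real.cos (k * h x)) = 1 :=
        inv_mul_cancel₀ (by linarith)
      linarith
    dsimp only
    linear_combination k * ε * Real.sin (k * h x) * wA ε (k * h x) ^ 2 * hw1
  | succ m ih =>
    obtain ⟨R, hR, hR'⟩ := ih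
    obtain ⟨R', hRp, hRd⟩ := hR.hasDeriv
    refine ⟨fun ε θ => R' ε θ * wA ε θ + (-((m + 2 : ℕ) : ℝ)) *
      (Real.sin θ * Real.sin (θ + (m + 2 : ℕ) * π / 2) * wA ε θ ^ (m + 4)),
      (hRp.mul .w).add ((TrigPoly.const _).mul
        ((TrigPoly.sin.mul (TrigPoly.sin_add _)).mul (TrigPoly.w.pow _))), ?_⟩
    intro ε k a β h h0 h1 hε hh
    rw [show m + 1 + 2 = (m + 2) + 1 by ring, iteratedDeriv_succ, hR' ε k a β h h0 h1 hε hh]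
    funext x
    have hk : HasDerivAt (fun x => k * x) k x := by
      simpa using (hasDerivAt_id x).const_mul k
    have hkh := (hh x).const_mul k
    have hw := (hasDerivAt_wA h0 h1 (k * h x)).comp x hkh
    have hRx := (hRd ε (k * h x) h0 h1).comp x hkh
    have t1 := ((hk.add_const (((m + 2 : ℕ) : ℝ) * π / 2)).sin).const_mul ε
    have t2 := ((hkh.add_const (((m + 2 : ℕ) : ℝ) * π / 2)).sin.const_mul ε).mul (hw.pow (m + 2))
    have := ((t1.sub t2).add (hRx.const_mul (ε ^ 2))).const_mul (k ^ (m + 1))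
    refine (this.congr_deriv ?_).deriv
    have e : ∀ y : ℝ, Real.sin (y + ((m + 2 + 1 : ℕ) : ℝ) * π / 2)
        = Real.cos (y + ((m + 2 : ℕ) : ℝ) * π / 2) := by
      intro y
      rw [← Real.sin_add_pi_div_two]
      congr 1; push_cast; ring
    rw [e, e]
    simp only [Function.comp, Pi.pow_apply, show m + 2 - 1 = m + 1 by omega]
    push_cast
    ring

/-- Since `g' ≥ 1/2`, `g` is an increasing bijection of `ℝ`, so `invFun g` is its inverse, with
derivative `1 / g'(invFun g x) = w`. -/
lemma hasDerivAt_invFun_arnold {ε k a β : ℝ} (h0 : 0 ≤ ε) (h1 : ε ≤ 1 / 2) (hε : ε = a * k)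
    (ha : 0 ≤ a)
    {g : ℝ → ℝ} (hg : g = fun x => x + β + a * Real.sin (k * x)) (x : ℝ) :
    HasDerivAt (Function.invFun g) (wA ε (k * Function.invFun g x)) x := by
  have hd : ∀ x, HasDerivAt g (1 + ε * Real.cos (k * x)) x := by
    intro x
    have hk : HasDerivAt (fun x => k * x) k x := by
      simpa using (hasDerivAt_id x).const_mul k
    rw [hg]
    refine (((hasDerivAt_id' x).add_const β).add (hk.sin.const_mul a)).congr_deriv ?_
    rw [hε]; ring
  have hmono : StrictMono g := strictMono_of_deriv_pos fun x => by
    rw [(hd x).deriv]; linarith [half_le_one_add_s11 h0 h1 (k * x)]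
  have hcont : Continuous g := continuous_iff_continuousAt.2 fun x => (hd x).continuousAt
  have hsurj : Function.Surjective g := by
    intro y
    refine mem_range_of_exists_le_of_exists_ge hcont ⟨y - β - a, ?_⟩ ⟨y - β + a, ?_⟩
    · rw [hg]; dsimp only; nlinarith [Real.sin_le_one (k * (y - β - a))]
    · rw [hg]; dsimp only; nlinarith [Real.neg_one_le_sin (k * (y - β + a))]
  have hr : Function.RightInverse (Function.invFun g) g := Function.rightInverse_invFun hsurj
  have hl : Function.LeftInverse (Function.invFun g) g := Function.leftInverse_invFun hmono.injective
  have him : Monotone (Function.invFun g) := fun p q hpq => by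
    rw [← hmono.le_iff_le, hr, hr]; exact hpq
  have hic : Continuous (Function.invFun g) := him.continuous_of_surjective hl.surjective
  exact (hd _).of_local_left_inverse hic.continuousAt
    (by linarith [half_le_one_add_s11 h0 h1 (k * Function.invFun g x)]) (Eventually.of_forall hr)

theorem stmt_11 (ι : ℕ) (hι : 2 ≤ ι) (ν : ℝ) (hν : ν ∈ Set.Ioo (0:ℝ) (1/2))
    (m : ℕ) (hm2 : 2 ≤ m) (hmι : m ≤ ι) :
    ∃ (C : ℝ) (N : ℕ), 0 < C ∧ ∀ n : ℕ, N ≤ n →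
      (n : ℝ) ^ ((ι : ℝ) - ν - 1) > 2 * π ∧
      ∀ (β x : ℝ),
        abs (iteratedDeriv m (φA ι ν β n) x -
          (2 * π) ^ m * (n : ℝ) ^ ((m : ℝ) - ((ι : ℝ) - ν)) *
            (Real.sin (2 * π * n * x + m * π / 2) -
              Real.sin (2 * π * n * Function.invFun (gA ι ν β n) x + m * π / 2) *
                (deriv (Function.invFun (gA ι ν β n)) x) ^ m)) ≤
          C * (n : ℝ) ^ (-((ι : ℝ) - m + 1 - 2 * ν)) := by
  obtain ⟨p, rfl⟩ : ∃ p, m = p + 2 := ⟨m - 2, by omega⟩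
  obtain ⟨R, hR, hR'⟩ := exists_remainder p
  obtain ⟨B, hB⟩ := hR.bounded
  have hB0 : 0 ≤ B := (abs_nonneg _).trans (hB 0 0 le_rfl (by norm_num))
  have hι' : (2 : ℝ) ≤ ι := by exact_mod_cast hι
  have hν2 := hν.2
  have hpi := Real.pi_pos
  have htend : Tendsto (fun n : ℕ => (n : ℝ) ^ ((ι : ℝ) - ν - 1)) atTop atTop :=
    (tendsto_rpow_atTop (by linarith)).comp tendsto_natCast_atTop_atTop
  obtain ⟨N, hN⟩ := eventually_atTop.1 ((htend.eventually_ge_atTop (4 * π)).and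
    (eventually_ge_atTop 1))
  refine ⟨(2 * π) ^ (p + 3) * (B + 1), N, by positivity, fun n hn => ?_⟩
  obtain ⟨hn1, hn2⟩ := hN n hn
  have hnp : (0 : ℝ) < n := by exact_mod_cast hn2
  have hn1' : (1 : ℝ) ≤ n := by exact_mod_cast hn2
  refine ⟨by linarith, fun β x => ?_⟩
  set a : ℝ := ((n : ℝ) ^ ((ι : ℝ) - ν))⁻¹ with ha
  set k : ℝ := 2 * π * n with hk
  have ha0 : 0 ≤ a := by positivity
  have hk0 : 0 ≤ k := by positivity
  obtain ⟨ε, hε⟩ : ∃ ε, ε = a * k := ⟨_, rfl⟩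
  have h0 : 0 ≤ ε := hε ▸ mul_nonneg ha0 hk0
  have hεn : ε = 2 * π * (n : ℝ) ^ (1 - ((ι : ℝ) - ν)) := by
    rw [hε, Real.rpow_sub hnp, Real.rpow_one, ha, hk]; ring
  have h1 : ε ≤ 1 / 2 := by
    rw [hεn, show 1 - ((ι : ℝ) - ν) = -((ι : ℝ) - ν - 1) by ring, Real.rpow_neg hnp.le,
      ← div_eq_mul_inv, div_le_iff₀ (by positivity)]
    linarith
  have hg : gA ι ν β n = fun x => x + β + a * Real.sin (k * x) := rfl
  have hh := fun x => hasDerivAt_invFun_arnold h0 h1 hε ha0 hg x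
  have hφ : φA ι ν β n = fun x => x + β + a * Real.sin (k * x)
      + Function.invFun (gA ι ν β n) x - 2 * x := rfl
  rw [hφ, hR' ε k a β _ h0 h1 hε hh, (hh x).deriv]
  have hmain : (2 * π) ^ (p + 2) * (n : ℝ) ^ (((p + 2 : ℕ) : ℝ) - ((ι : ℝ) - ν))
      = k ^ (p + 1) * ε := by
    rw [Real.rpow_sub hnp, Real.rpow_natCast, hε, ha, hk, div_eq_mul_inv]
    ring
  rw [hmain]
  have hb := hB ε (k * Function.invFun (gA ι ν β n) x) h0 h1
  dsimp only
  rw [show ∀ u v w r : ℝ, k ^ (p + 1) * (ε * u - ε * v * w + ε ^ 2 * r)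
      - k ^ (p + 1) * ε * (u - v * w) = k ^ (p + 1) * ε ^ 2 * r by intros; ring,
    abs_mul, abs_of_nonneg (by positivity)]
  have hke : k ^ (p + 1) * ε ^ 2 = (2 * π) ^ (p + 3) *
      (n : ℝ) ^ ((p + 1 : ℕ) + 2 * (1 - ((ι : ℝ) - ν))) := by
    rw [Real.rpow_add hnp, Real.rpow_natCast, mul_comm (2 : ℝ) (1 - _), Real.rpow_mul hnp.le,
      Real.rpow_two, hεn, hk]
    ring
  -- Here `ι ≥ 2` absorbs the exponent `m + 1 - 2ι + 2ν` into `m - ι - 1 + 2ν`.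
  have hexp : (n : ℝ) ^ ((p + 1 : ℕ) + 2 * (1 - ((ι : ℝ) - ν)))
      ≤ (n : ℝ) ^ (-((ι : ℝ) - (p + 2 : ℕ) + 1 - 2 * ν)) := by
    apply Real.rpow_le_rpow_of_exponent_le hn1'
    push_cast
    linarith
  rw [hke]
  calc _ ≤ (2 * π) ^ (p + 3) * (n : ℝ) ^ (-((ι : ℝ) - (p + 2 : ℕ) + 1 - 2 * ν)) * (B + 1) := by
        gcongr
        linarith
    _ = _ := by ring
end
end

section
/- For every real number α ∈ (0,1) and every T ∈ ℕ, there exists n ∈ ℕ with n > T such that 1/3 − 10⁻⁶ < ‖nα‖ < 2/3 + 10⁻⁶, where ‖t‖ := inf_{p∈ℤ} |t + p| denotes the distance from t to the nearest integer. -/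
/-!
Some multiple `mα` lies in the middle third `[1/3, 2/3]` modulo `1`: if `α ≤ 1/3`, the steps of the
sequence `mα` are too short to jump over the middle third, and the case `α ≥ 2/3` follows from
`α ↦ 1 - α` (`exists_mul_mem_middle_third`). By Dirichlet's approximation theorem there are
arbitrarily large `N` with `Nα` as close to an integer as desired (`exists_large_near_int`).
Then `n = m + N` is large and `nα` is, modulo `1`, a tiny perturbation of `mα`.
-/

open Real Filter Set

noncomputable section

/-- The distance from `t` to the nearest integer, `‖t‖ = inf_{p ∈ ℤ} |t + p|`. -/
def nearestIntDist (t : ℝ) : ℝ := ⨅ p : ℤ, |t + p|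

lemma exists_mul_mem_middle_third_of_le {β : ℝ} (h0 : 0 < β) (h1 : β ≤ 1 / 3) :
    ∃ m : ℕ, 1 / 3 ≤ m * β ∧ m * β ≤ 2 / 3 := by
  refine ⟨⌈1 / 3 / β⌉₊, ?_, ?_⟩
  · exact (div_le_iff₀ h0).1 (Nat.le_ceil _)
  · have h := Nat.ceil_lt_add_one (a := 1 / 3 / β) (by positivity)
    have h2 := mul_lt_mul_of_pos_right h h0
    rw [add_mul, div_mul_cancel₀ _ h0.ne'] at h2
    linarith

lemma exists_mul_mem_middle_third {α : ℝ} (h0 : 0 < α) (h1 : α < 1) :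
    ∃ (m : ℕ) (p : ℤ), 1 / 3 ≤ m * α - p ∧ m * α - p ≤ 2 / 3 := by
  rcases le_or_gt α (1 / 3) with h | h
  · obtain ⟨m, hm⟩ := exists_mul_mem_middle_third_of_le h0 h
    exact ⟨m, 0, by simpa using hm⟩
  rcases le_or_gt α (2 / 3) with h' | h'
  · refine ⟨1, 0, ?_, ?_⟩ <;> norm_num <;> linarith
  · obtain ⟨m, hm, hm'⟩ :=
      exists_mul_mem_middle_third_of_le (β := 1 - α) (by linarith) (by linarith)
    refine ⟨m, m - 1, ?_, ?_⟩ <;> push_cast <;> linarith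

/-- The bound `N > T` is obtained by multiplying a Dirichlet denominator `k`, for which `kα` is
within `1 / (2000000 (T + 1) + 1)` of an integer, by `T + 1`. -/
lemma exists_large_near_int (α : ℝ) (T : ℕ) :
    ∃ (N : ℕ) (j : ℤ), T < N ∧ |N * α - j| ≤ 1 / 2000000 := by
  obtain ⟨k, hk, -, h⟩ := Real.exists_nat_abs_mul_sub_round_le α
    (n := 2000000 * (T + 1)) (by positivity)
  refine ⟨(T + 1) * k, (T + 1) * round (k * α), by nlinarith, ?_⟩
  push_cast at h ⊢
  have hT : (0 : ℝ) < T + 1 := by positivity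
  rw [mul_assoc, ← mul_sub, abs_mul, abs_of_pos hT]
  calc ((T : ℝ) + 1) * |k * α - round (k * α)|
      ≤ (T + 1) * (1 / (2000000 * (T + 1) + 1)) := by gcongr
    _ ≤ 1 / 2000000 := by
      rw [mul_one_div, div_le_div_iff₀ (by positivity) (by norm_num)]
      linarith

theorem stmt_13 (α : ℝ) (hα : α ∈ Set.Ioo (0:ℝ) 1) (T : ℕ) :
    ∃ n : ℕ, T < n ∧ 1/3 - 1/1000000 < nearestIntDist (n * α) ∧
      nearestIntDist (n * α) < 2/3 + 1/1000000 := by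
  obtain ⟨m, p, hm, hm'⟩ := exists_mul_mem_middle_third hα.1 hα.2
  obtain ⟨N, j, hN, he⟩ := exists_large_near_int α T
  obtain ⟨he1, he2⟩ := abs_le.1 he
  refine ⟨m + N, by omega, ?_, ?_⟩
  · have key : 1 / 3 - 1 / 2000000 ≤ nearestIntDist ((m + N : ℕ) * α) := by
      refine le_ciInf fun q => ?_
      push_cast
      -- `(m + N)α + q` is the integer `p + j + q` plus a number in (almost) the middle third
      rcases le_or_gt 0 (p + j + q) with hr | hr
      · have hr' : (0 : ℝ) ≤ p + j + q := by exact_mod_cast hr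
        exact le_trans (by linarith) (le_abs_self _)
      · have hr' : (p : ℝ) + j + q ≤ -1 := by
          have : p + j + q ≤ -1 := by omega
          exact_mod_cast this
        exact le_trans (by linarith) (neg_le_abs _)
    linarith
  · have key : nearestIntDist ((m + N : ℕ) * α) ≤ |((m + N : ℕ) : ℝ) * α + (-(p + j) : ℤ)| :=
      ciInf_le ⟨0, by rintro _ ⟨q, rfl⟩; exact abs_nonneg _⟩ (-(p + j))
    refine key.trans_lt ?_
    push_cast
    rw [abs_lt]
    constructor <;> linarith
end
end

section
/- Let α be an irrational number, and let g₁, g₂ be increasing circle homeomorphism lifts with rotation numbers ρ(g₁) = ρ(g₂) = α. If g₁(x) + g₁^{-1}(x) = g₂(x) + g₂^{-1}(x) for all x ∈ ℝ, then g₁ = g₂. -/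
/-!
Let `K` be the coincidence set `{x | g₁ x = g₂ x}`. The equation `g₁ + g₁⁻¹ = g₂ + g₂⁻¹` makes `K`
invariant under the common action of `g₁` and `g₂`.

*`K` is nonempty.* Otherwise, by continuity, one map lies strictly above the other, and then
their rotation numbers differ because one of them is irrational
(`not_forall_lt_of_translationNumber_eq`). The point is a one-sided near-return: for every `δ > 0`
there are `q ≥ 1`, `p` and `x` with `q α < p` and `x - δ < g^q x - p`
(`exists_near_return`).

*`K` is everything.* Suppose `g₂ x₀ < g₁ x₀`. Then `x₀` lies in a gap `(a, b)` of `K`, and the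
iterates of this gap are again gaps. The map `(x, y) ↦ (y, g₁ y + g₁⁻¹ y - x)` preserves area and
carries the region between the two graphs over a gap to the one over the next gap
(`volume_region_step`), so all these regions have the same positive area. As the region over a gap
has area at most the length of that gap, the lengths are bounded below. But the left endpoints of
the iterated gaps are pairwise distinct modulo `1` by irrationality, so two of them are
arbitrarily close modulo `1`, and one gap would contain an endpoint of another one, which belongs
to `K`.
-/

open Real Filter Set

noncomputable section

/-- An increasing circle homeomorphism lift: a strictly increasing homeomorphism of `ℝ`
commuting with the unit translation. -/
def IsCircleLift (g : ℝ → ℝ) : Prop :=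
  StrictMono g ∧ Continuous g ∧ Function.Surjective g ∧ ∀ x, g (x + 1) = g x + 1

open MeasureTheory

/-! ### Irrational translation numbers -/

/-- With `α` the translation number of `G`, the maps `x ↦ G^q x - p` are ordered as the
numbers `q α - p` whenever the latter are distinct. -/
lemma pow_sub_le_pow_sub (G : CircleDeg1Lift) {q₁ q₂ : ℕ} {p₁ p₂ : ℤ}
    (h : q₁ * G.translationNumber - p₁ < q₂ * G.translationNumber - p₂) (x : ℝ) :
    (G ^ q₁) x - p₁ ≤ (G ^ q₂) x - p₂ := by
  rcases le_total q₁ q₂ with hq | hq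
  · obtain ⟨n, rfl⟩ := Nat.exists_eq_add_of_le hq
    have h1 : ((p₂ - p₁ : ℤ) : ℝ) < (G ^ n).translationNumber := by
      rw [CircleDeg1Lift.translationNumber_pow]
      push_cast at h ⊢
      linarith
    have h2 := (G ^ n).lt_map_of_int_lt_translationNumber h1 ((G ^ q₁) x)
    rw [add_comm q₁ n, pow_add, CircleDeg1Lift.mul_apply]
    push_cast at h2
    linarith
  · obtain ⟨n, rfl⟩ := Nat.exists_eq_add_of_le hq
    have h1 : (G ^ n).translationNumber < ((p₁ - p₂ : ℤ) : ℝ) := by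
      rw [CircleDeg1Lift.translationNumber_pow]
      push_cast at h ⊢
      linarith
    have h2 := (G ^ n).map_lt_of_translationNumber_lt_int h1 ((G ^ q₂) x)
    rw [add_comm q₂ n, pow_add, CircleDeg1Lift.mul_apply]
    push_cast at h2
    linarith

/-- One-sided Dirichlet approximation. -/
lemma exists_mul_sub_mem_Ioo {α : ℝ} (hα : Irrational α) {ε : ℝ} (hε : 0 < ε) :
    ∃ (q : ℕ) (p : ℤ), 0 < q ∧ -ε < q * α - p ∧ q * α - p < 0 := by
  obtain ⟨N, hN⟩ := exists_nat_gt (1 / ε)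
  have hNpos : 0 < N := by
    have : (0 : ℝ) < N := lt_trans (by positivity) hN
    exact_mod_cast this
  obtain ⟨q, hq, -, hle⟩ := Real.exists_nat_abs_mul_sub_round_le α hNpos
  set p : ℤ := round ((q : ℝ) * α)
  have hlt : |(q : ℝ) * α - p| < ε := by
    refine hle.trans_lt ?_
    rw [div_lt_iff₀ hε] at hN
    rw [div_lt_iff₀ (by positivity)]
    nlinarith
  have hne : (q : ℝ) * α - p ≠ 0 := by
    have := (hα.natCast_mul hq.ne').sub_intCast p
    exact this.ne_zero
  rw [abs_lt] at hlt
  rcases lt_or_gt_of_ne hne with hneg | hpos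
  · exact ⟨q, p, hq, hlt.1, hneg⟩
  · -- A small positive value `γ` is converted to the negative value `k γ - 1`,
    -- where `k` is the last multiple with `k γ ≤ 1`.
    set γ := (q : ℝ) * α - p with hγ
    have hkle : (⌊1 / γ⌋₊ : ℝ) ≤ 1 / γ := Nat.floor_le (by positivity)
    have hklt : 1 / γ < (⌊1 / γ⌋₊ : ℝ) + 1 := Nat.lt_floor_add_one _
    set k := ⌊1 / γ⌋₊
    rw [le_div_iff₀ hpos] at hkle
    rw [div_lt_iff₀ hpos] at hklt
    have hk : 0 < k ∨ k = 0 := by omega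
    rcases hk with hk | hk
    · have hirr : (((k * q : ℕ) : ℝ) * α - ((k * p + 1 : ℤ) : ℝ)) ≠ 0 :=
        ((hα.natCast_mul (Nat.mul_pos hk hq).ne').sub_intCast _).ne_zero
      have hval : (((k * q : ℕ) : ℝ) * α - ((k * p + 1 : ℤ) : ℝ)) = k * γ - 1 := by
        rw [hγ]; push_cast; ring
      refine ⟨k * q, k * p + 1, Nat.mul_pos hk hq, ?_, ?_⟩
      · rw [hval]; linarith
      · rw [hval] at hirr ⊢
        exact lt_of_le_of_ne (by linarith) hirr
    · refine ⟨q, p + 1, hq, ?_, ?_⟩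
      · rw [hk] at hklt
        push_cast at hklt ⊢
        linarith
      · -- `γ < 1` because `round` is within `1 / 2`.
        have := abs_sub_round ((q : ℝ) * α)
        rw [abs_le] at this
        push_cast
        change _ ∧ (q : ℝ) * α - p ≤ 1 / 2 at this
        linarith [this.2]

/-- Otherwise all maps `T = G^q - p` with `q ≥ 1` and `q α < p` satisfy `T ≤ id - δ`. Each such `T`
is bounded above by a product `T₂ T₁` of two others, so `T 0 + δ ≤ T₁ 0`; this is impossible when
`T 0` is within `δ` of the supremum of all these values. -/
lemma exists_near_return (G : CircleDeg1Lift) (hα : Irrational G.translationNumber)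
    {δ : ℝ} (hδ : 0 < δ) :
    ∃ (q : ℕ) (p : ℤ) (x : ℝ), 0 < q ∧ q * G.translationNumber < p ∧
      x - δ < (G ^ q) x - p := by
  by_contra! hcon
  set α := G.translationNumber with hαdef
  let S : Set ℝ := {y | ∃ (q : ℕ) (p : ℤ), 0 < q ∧ q * α < p ∧ y = (G ^ q) 0 - p}
  have hne : S.Nonempty := by
    obtain ⟨q, p, hq, -, h⟩ := exists_mul_sub_mem_Ioo hα one_pos
    exact ⟨_, q, p, hq, by linarith, rfl⟩
  have hbdd : BddAbove S := by
    refine ⟨0, ?_⟩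
    rintro y ⟨q, p, hq, h, rfl⟩
    linarith [hcon q p 0 hq h]
  obtain ⟨y, ⟨q, p, hq, h, rfl⟩, hy⟩ := exists_lt_of_lt_csSup hne (sub_lt_self (sSup S) hδ)
  obtain ⟨r, s, hr, hrs, hneg⟩ :=
    exists_mul_sub_mem_Ioo hα (show 0 < (p - q * α) / 2 by linarith)
  have h1 : (G ^ q) 0 - p ≤ (G ^ (r + r)) 0 - ((s + s : ℤ) : ℝ) := by
    apply pow_sub_le_pow_sub
    push_cast
    linarith
  have h2 := hcon r s ((G ^ r) 0) hr (by linarith)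
  have h3 : (G ^ r) 0 - s ≤ sSup S := le_csSup hbdd ⟨r, s, hr, by linarith, rfl⟩
  rw [pow_add, CircleDeg1Lift.mul_apply] at h1
  push_cast at h1
  linarith

lemma not_forall_lt_of_translationNumber_eq (G H : CircleDeg1Lift) (hG : Continuous G)
    (hH : Continuous H) (hα : Irrational G.translationNumber)
    (hτ : H.translationNumber = G.translationNumber) : ¬ ∀ x, G x < H x := by
  intro hlt
  obtain ⟨δ, hδ, hδle⟩ : ∃ δ > 0, ∀ x, G x + δ ≤ H x := by
    obtain ⟨z, -, hz⟩ := (isCompact_Icc (a := (0 : ℝ)) (b := 1)).exists_isMinOn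
      ⟨0, by simp⟩ (hH.sub hG).continuousOn
    refine ⟨H z - G z, by linarith [hlt z], fun x => ?_⟩
    have h1 : H z - G z ≤ H (Int.fract x) - G (Int.fract x) :=
      hz ⟨Int.fract_nonneg x, (Int.fract_lt_one x).le⟩
    have h2 := G.map_fract_sub_fract_eq x
    have h3 := H.map_fract_sub_fract_eq x
    linarith
  obtain ⟨q, p, x, hq, hqp, hx⟩ := exists_near_return G hα hδ
  obtain ⟨n, rfl⟩ : ∃ n, q = n + 1 := ⟨q - 1, by omega⟩
  have hle : (G ^ n) x ≤ (H ^ n) x :=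
    CircleDeg1Lift.pow_mono (fun y => by linarith [hδle y]) n x
  have h1 : x + p ≤ (H ^ (n + 1)) x := by
    rw [pow_succ', CircleDeg1Lift.mul_apply] at hx ⊢
    linarith [hδle ((G ^ n) x), H.mono hle]
  have h2 := (H ^ (n + 1)).le_translationNumber_of_add_int_le h1
  rw [CircleDeg1Lift.translationNumber_pow, hτ] at h2
  linarith

/-! ### Gaps of the coincidence set -/

/-- `(a, b)` is a connected component of the complement of the coincidence set of `f` and `g`. -/
structure IsGap (f g : ℝ → ℝ) (a b : ℝ) : Prop where
  lt : a < b
  left : f a = g a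
  right : f b = g b
  ne : ∀ x ∈ Ioo a b, f x ≠ g x

section

variable {f g fi gi : ℝ → ℝ}

lemma map_eq_of_eq (hfi : Function.LeftInverse fi f) (hgi : Function.LeftInverse gi g)
    (heq : ∀ x, f x + fi x = g x + gi x) {x : ℝ} (hx : f x = g x) : f (f x) = g (f x) := by
  have h1 := heq (f x)
  rw [hfi x, hx, hgi x] at h1
  rw [hx]
  linarith

lemma inv_eq_of_eq (hfi' : Function.RightInverse fi f) (hgi' : Function.RightInverse gi g)
    (heq : ∀ x, f x + fi x = g x + gi x) {y : ℝ} (hy : f y = g y) : f (fi y) = g (fi y) := by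
  have h1 : fi y = gi y := by linarith [heq y]
  rw [hfi' y, h1, hgi' y]

lemma IsGap.map (hf : StrictMono f)
    (hfi : Function.LeftInverse fi f) (hgi : Function.LeftInverse gi g)
    (hfi' : Function.RightInverse fi f) (hgi' : Function.RightInverse gi g)
    (heq : ∀ x, f x + fi x = g x + gi x) {a b : ℝ} (h : IsGap f g a b) :
    IsGap f g (f a) (f b) := by
  refine ⟨hf h.lt, map_eq_of_eq hfi hgi heq h.left, map_eq_of_eq hfi hgi heq h.right, ?_⟩
  intro y hy hyK
  refine h.ne (fi y) ⟨?_, ?_⟩ (inv_eq_of_eq hfi' hgi' heq hyK)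
  · rw [← hf.lt_iff_lt, hfi' y]; exact hy.1
  · rw [← hf.lt_iff_lt, hfi' y]; exact hy.2

/-- Swapping coordinates turns the region between the graphs of `g` and `f` over `(a, b)` into the
region between the graphs of `fi` and `gi` over `(f a, f b)`; by the functional equation its
vertical sections have the same lengths as those of the region between `g` and `f`. -/
lemma volume_region_step (hf : StrictMono f) (hg : StrictMono g)
    (hfc : Continuous f) (hgc : Continuous g)
    (hfi' : Function.RightInverse fi f) (hgi' : Function.RightInverse gi g)
    (heq : ∀ x, f x + fi x = g x + gi x) {a b : ℝ} (ha : f a = g a) (hb : f b = g b) :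
    (volume.prod volume) (regionBetween g f (Ioo a b)) =
      (volume.prod volume) (regionBetween g f (Ioo (f a) (f b))) := by
  have hfim : Monotone fi := fun x y hxy => by
    rw [← hf.le_iff_le, hfi' x, hfi' y]; exact hxy
  have hgim : Monotone gi := fun x y hxy => by
    rw [← hg.le_iff_le, hgi' x, hgi' y]; exact hxy
  have hswap : Prod.swap ⁻¹' (regionBetween fi gi (Ioo (f a) (f b))) =
      regionBetween g f (Ioo a b) := by
    ext ⟨x, y⟩
    have e1 : fi y < x ↔ y < f x := by rw [← hf.lt_iff_lt, hfi' y]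
    have e2 : x < gi y ↔ g x < y := by rw [← hg.lt_iff_lt, hgi' y]
    simp only [regionBetween, mem_preimage, Prod.swap, mem_ofPred_eq, mem_Ioo, e1, e2]
    constructor
    · rintro ⟨⟨h1, h2⟩, h3, h4⟩
      exact ⟨⟨hf.lt_iff_lt.1 (h1.trans h3), hg.lt_iff_lt.1 (by rw [← hb]; exact h4.trans h2)⟩,
        h4, h3⟩
    · rintro ⟨⟨h1, h2⟩, h3, h4⟩
      exact ⟨⟨by rw [ha]; exact (hg h1).trans h3, h4.trans (hf h2)⟩, h4, h3⟩
  have hmeas : MeasurableSet (regionBetween fi gi (Ioo (f a) (f b))) :=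
    measurableSet_regionBetween hfim.measurable hgim.measurable measurableSet_Ioo
  rw [← hswap, (Measure.measurePreserving_swap (μ := (volume : Measure ℝ))
      (ν := (volume : Measure ℝ))).measure_preimage hmeas.nullMeasurableSet,
    volume_regionBetween_eq_lintegral hfim.measurable.aemeasurable hgim.measurable.aemeasurable
      measurableSet_Ioo,
    volume_regionBetween_eq_lintegral hgc.measurable.aemeasurable hfc.measurable.aemeasurable
      measurableSet_Ioo]
  congr 1
  ext y
  congr 1
  simp only [Pi.sub_apply]
  linarith [heq y]

lemma volume_region_le (hf : StrictMono f) (hg : StrictMono g) {a b : ℝ}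
    (ha : f a = g a) (hab : f b ≤ f a + 1) :
    (volume.prod volume) (regionBetween g f (Ioo a b)) ≤ ENNReal.ofReal (b - a) := by
  have hsub : regionBetween g f (Ioo a b) ⊆ Ioo a b ×ˢ Ioo (f a) (f a + 1) := by
    rintro ⟨x, y⟩ ⟨hx, hy⟩
    simp only [mem_Ioo] at hx hy
    refine ⟨hx, ?_, ?_⟩
    · rw [ha]; exact (hg hx.1).trans hy.1
    · exact (hy.2.trans (hf hx.2)).trans_le hab
  refine (measure_mono hsub).trans ?_
  rw [Measure.prod_prod]
  simp

lemma volume_region_pos (hfc : Continuous f) (hgc : Continuous g) {a b x : ℝ}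
    (hx : x ∈ Ioo a b) (hlt : g x < f x) :
    0 < (volume.prod volume) (regionBetween g f (Ioo a b)) := by
  have ho : IsOpen (regionBetween g f (Ioo a b)) := by
    have : regionBetween g f (Ioo a b) =
        {p : ℝ × ℝ | a < p.1 ∧ p.1 < b ∧ g p.1 < p.2 ∧ p.2 < f p.1} := by
      ext p; simp [regionBetween, and_assoc]
    rw [this]
    exact (isOpen_lt (by fun_prop) (by fun_prop)).and <|
      (isOpen_lt (by fun_prop) (by fun_prop)).and <|
      (isOpen_lt (by fun_prop) (by fun_prop)).and (isOpen_lt (by fun_prop) (by fun_prop))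
  refine ho.measure_pos _ ⟨(x, (g x + f x) / 2), hx, ?_⟩
  simp only [mem_Ioo]
  constructor <;> linarith

end

lemma exists_isGap {f g : ℝ → ℝ} (hfc : Continuous f) (hgc : Continuous g)
    (hf1 : ∀ (x : ℝ) (n : ℤ), f (x + n) = f x + n) (hg1 : ∀ (x : ℝ) (n : ℤ), g (x + n) = g x + n)
    {z x : ℝ} (hz : f z = g z) (hx : f x ≠ g x) :
    ∃ a b, IsGap f g a b ∧ x ∈ Ioo a b := by
  have hK : IsClosed {y | f y = g y} := isClosed_eq hfc hgc
  have hl : ({y | f y = g y} ∩ Iic x).Nonempty := by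
    refine ⟨z + (⌊x - z⌋ : ℤ), ?_, ?_⟩
    · simp only [mem_ofPred_eq]; rw [hf1, hg1, hz]
    · simp only [mem_Iic]; linarith [Int.floor_le (x - z)]
  have hr : ({y | f y = g y} ∩ Ici x).Nonempty := by
    refine ⟨z + (⌈x - z⌉ : ℤ), ?_, ?_⟩
    · simp only [mem_ofPred_eq]; rw [hf1, hg1, hz]
    · simp only [mem_Ici]; linarith [Int.le_ceil (x - z)]
  have hlb : BddAbove ({y | f y = g y} ∩ Iic x) := ⟨x, fun y hy => hy.2⟩
  have hrb : BddBelow ({y | f y = g y} ∩ Ici x) := ⟨x, fun y hy => hy.2⟩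
  have ha := (hK.inter isClosed_Iic).csSup_mem hl hlb
  have hb := (hK.inter isClosed_Ici).csInf_mem hr hrb
  set a := sSup ({y | f y = g y} ∩ Iic x)
  set b := sInf ({y | f y = g y} ∩ Ici x)
  have hax : a < x := lt_of_le_of_ne ha.2 (fun h => hx (h ▸ ha.1))
  have hxb : x < b := lt_of_le_of_ne hb.2 (fun h => hx (h ▸ hb.1))
  refine ⟨a, b, ⟨hax.trans hxb, ha.1, hb.1, fun y hy hyK => ?_⟩, hax, hxb⟩
  rcases le_total y x with h | h
  · exact absurd (le_csSup hlb ⟨hyK, h⟩) (not_le.2 hy.1)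
  · exact absurd (csInf_le hrb ⟨hyK, h⟩) (not_le.2 hy.2)

/-- By pigeonhole, infinitely many reals contain two that are close modulo `1`. -/
lemma exists_close_mod_one (u : ℕ → ℝ) {c : ℝ} (hc : 0 < c) :
    ∃ i j : ℕ, i ≠ j ∧ |Int.fract (u i) - Int.fract (u j)| < c := by
  obtain ⟨l, -, φ, hφ, hl⟩ := (isCompact_Icc (a := (0 : ℝ)) (b := 1)).tendsto_subseq
    (x := fun n => Int.fract (u n))
    (fun n => ⟨Int.fract_nonneg _, (Int.fract_lt_one _).le⟩)
  obtain ⟨N, hN⟩ := Metric.cauchySeq_iff'.1 hl.cauchySeq c hc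
  exact ⟨φ (N + 1), φ N, (hφ (Nat.lt_succ_self N)).ne', hN (N + 1) (Nat.le_succ N)⟩

/-- A gap on which `g < f` somewhere contradicts irrationality, by area preservation. -/
lemma le_of_coincidence (F : CircleDeg1Lift) {g fi gi : ℝ → ℝ}
    (hα : Irrational F.translationNumber)
    (hf : StrictMono F) (hg : StrictMono g) (hfc : Continuous F) (hgc : Continuous g)
    (hg1 : ∀ (x : ℝ) (n : ℤ), g (x + n) = g x + n)
    (hfi : Function.LeftInverse fi F) (hgi : Function.LeftInverse gi g)
    (hfi' : Function.RightInverse fi F) (hgi' : Function.RightInverse gi g)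
    (heq : ∀ x, F x + fi x = g x + gi x) {z : ℝ} (hz : F z = g z) (x : ℝ) : F x ≤ g x := by
  by_contra! hlt
  obtain ⟨a, b, hab, hx⟩ := exists_isGap hfc hgc F.map_add_int hg1 hz hlt.ne'
  have hgap : ∀ n : ℕ, IsGap F g (F^[n] a) (F^[n] b) := by
    intro n
    induction n with
    | zero => simpa using hab
    | succ n ih =>
      rw [Function.iterate_succ_apply', Function.iterate_succ_apply']
      exact ih.map hf hfi hgi hfi' hgi' heq
  have hvol : ∀ n : ℕ, (volume.prod volume) (regionBetween g F (Ioo (F^[n] a) (F^[n] b))) =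
      (volume.prod volume) (regionBetween g F (Ioo a b)) := by
    intro n
    induction n with
    | zero => simp
    | succ n ih =>
      rw [Function.iterate_succ_apply', Function.iterate_succ_apply', ← ih]
      exact (volume_region_step hf hg hfc hgc hfi' hgi' heq (hgap n).left (hgap n).right).symm
  -- Coincidence is invariant under integer translations, so no gap is longer than `1`.
  have hper : ∀ (y : ℝ) (n : ℤ), F y = g y → F (y + n) = g (y + n) := by
    intro y n hy
    rw [F.map_add_int, hg1, hy]
  have hlen : ∀ n : ℕ, F^[n] b ≤ F^[n] a + 1 := by
    intro n
    by_contra! h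
    have := hper _ 1 (hgap n).left
    exact (hgap n).ne (F^[n] a + (1 : ℤ)) ⟨by simp, by simpa using h⟩ this
  set A := (volume.prod volume) (regionBetween g F (Ioo a b))
  have hA : 0 < A := volume_region_pos hfc hgc hx hlt
  have hAle : ∀ n : ℕ, A ≤ ENNReal.ofReal (F^[n] b - F^[n] a) := by
    intro n
    rw [← hvol n]
    refine volume_region_le hf hg (hgap n).left ?_
    have := hlen (n + 1)
    rwa [Function.iterate_succ_apply', Function.iterate_succ_apply'] at this
  have hAtop : A ≠ ⊤ := ((hAle 0).trans_lt ENNReal.ofReal_lt_top).ne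
  have hc : 0 < A.toReal := ENNReal.toReal_pos hA.ne' hAtop
  have hcle : ∀ n : ℕ, A.toReal ≤ F^[n] b - F^[n] a := fun n =>
    ENNReal.toReal_le_of_le_ofReal (by linarith [(hgap n).lt]) (hAle n)
  -- A closer left endpoint of gap `j` would translate into the interior of gap `i`.
  have key : ∀ i j : ℕ, Int.fract (F^[i] a) < Int.fract (F^[j] a) →
      A.toReal ≤ Int.fract (F^[j] a) - Int.fract (F^[i] a) := by
    intro i j hij
    by_contra! h
    have h1 := hper _ (⌊F^[i] a⌋ - ⌊F^[j] a⌋) (hgap j).left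
    refine (hgap i).ne _ ⟨?_, ?_⟩ h1
    · push_cast
      have := Int.floor_add_fract (F^[i] a)
      have := Int.floor_add_fract (F^[j] a)
      linarith
    · push_cast
      have := Int.floor_add_fract (F^[i] a)
      have := Int.floor_add_fract (F^[j] a)
      linarith [hcle i]
  have hdist : ∀ i j : ℕ, i < j → Int.fract (F^[i] a) ≠ Int.fract (F^[j] a) := by
    intro i j hij h
    obtain ⟨n, rfl⟩ := Nat.exists_eq_add_of_lt hij
    obtain ⟨m, hm⟩ := Int.fract_eq_fract.1 h.symm
    have h1 : (F ^ (n + 1)) (F^[i] a) = F^[i] a + m := by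
      rw [CircleDeg1Lift.coe_pow, ← Function.iterate_add_apply, ← hm]
      rw [show n + 1 + i = i + n + 1 by ring]
      ring
    have h2 := F.translationNumber_of_map_pow_eq_add_int h1 (Nat.succ_pos n)
    refine hα ⟨(m : ℚ) / ((n + 1 : ℕ) : ℚ), ?_⟩
    rw [h2]
    push_cast
    rfl
  obtain ⟨i, j, hij, hclose⟩ := exists_close_mod_one (fun n => F^[n] a) hc
  have hne : Int.fract (F^[i] a) ≠ Int.fract (F^[j] a) := by
    rcases lt_or_gt_of_ne hij with h | h
    · exact hdist i j h
    · exact (hdist j i h).symm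
  rw [abs_lt] at hclose
  rcases lt_or_gt_of_ne hne with h | h
  · linarith [key i j h, hclose.1]
  · linarith [key j i h, hclose.2]

/-- Injectivity of the Herman map `Φ` at irrational rotation numbers. -/
theorem stmt_16 (α : ℝ) (hα : Irrational α) (g₁ g₂ : ℝ → ℝ)
    (h₁ : IsCircleLift g₁) (h₂ : IsCircleLift g₂)
    (hr₁ : HasRotationNumber g₁ α) (hr₂ : HasRotationNumber g₂ α)
    (heq : ∀ x, g₁ x + Function.invFun g₁ x = g₂ x + Function.invFun g₂ x) :
    g₁ = g₂ := by
  obtain ⟨hm₁, hc₁, hs₁, ht₁⟩ := h₁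
  obtain ⟨hm₂, hc₂, hs₂, ht₂⟩ := h₂
  let G₁ : CircleDeg1Lift := ⟨⟨g₁, hm₁.monotone⟩, ht₁⟩
  let G₂ : CircleDeg1Lift := ⟨⟨g₂, hm₂.monotone⟩, ht₂⟩
  have hτ₁ : G₁.translationNumber = α := G₁.translationNumber_eq_of_tendsto₀ hr₁
  have hτ₂ : G₂.translationNumber = α := G₂.translationNumber_eq_of_tendsto₀ hr₂
  obtain ⟨z, hz⟩ : ∃ z, g₁ z = g₂ z := by
    by_contra! hne
    have hA : ¬ ∀ x, g₁ x < g₂ x :=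
      not_forall_lt_of_translationNumber_eq G₁ G₂ hc₁ hc₂ (hτ₁ ▸ hα) (hτ₂.trans hτ₁.symm)
    have hB : ¬ ∀ x, g₂ x < g₁ x :=
      not_forall_lt_of_translationNumber_eq G₂ G₁ hc₂ hc₁ (hτ₂ ▸ hα) (hτ₁.trans hτ₂.symm)
    push Not at hA hB
    obtain ⟨x, hx⟩ := hA
    obtain ⟨y, hy⟩ := hB
    obtain ⟨w, hw⟩ := mem_range_of_exists_le_of_exists_ge (hc₁.sub hc₂) (c := 0)
      ⟨y, sub_nonpos.2 hy⟩ ⟨x, sub_nonneg.2 hx⟩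
    exact hne w (sub_eq_zero.1 hw)
  have hl₁ := Function.leftInverse_invFun hm₁.injective
  have hl₂ := Function.leftInverse_invFun hm₂.injective
  have hi₁ := Function.rightInverse_invFun hs₁
  have hi₂ := Function.rightInverse_invFun hs₂
  funext x
  apply le_antisymm
  · exact le_of_coincidence G₁ (hτ₁ ▸ hα) hm₁ hm₂ hc₁ hc₂ G₂.map_add_int hl₁ hl₂ hi₁ hi₂ heq hz x
  · exact le_of_coincidence G₂ (hτ₂ ▸ hα) hm₂ hm₁ hc₂ hc₁ G₁.map_add_int hl₂ hl₁ hi₂ hi₁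
      (fun x => (heq x).symm) hz.symm x
end
end

section
/- Fix σ ∈ (0,1) and consider the Arnold family f_{λ,σ}(x) = x + λ + (σ/(2π)) sin(2πx). Then: (a) the function λ ↦ ρ(f_{λ,σ}) is nondecreasing on ℝ; (b) if λ₀ ∈ ℝ is such that ρ(f_{λ₀,σ}) = p/q is rational, then there exists a nondegenerate closed interval I containing λ₀ such that ρ(f_{λ,σ}) = p/q for all λ ∈ I; (c) if ρ(f_{λ₀,σ}) is irrational, then ρ(f_{λ,σ}) > ρ(f_{λ₀,σ}) for every λ > λ₀ and ρ(f_{λ,σ}) < ρ(f_{λ₀,σ}) for every λ < λ₀. -/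
/-!
The maps `arnold lam σ` are lifts of circle homeomorphisms, so `HasRotationNumber` is Mathlib's
translation number `τ`, and monotonicity in the parameter is monotonicity of `τ`.

*Rational case.* If `τ = p / q` with `q > 0`, a tongue collapses to a point only if
`f^q = id + p`. This never happens (`arnold_iterate_ne`): by the identity theorem the equality
would persist on `ℂ`, whereas the entire extension of `f` has a critical point, because
`1 + σ cos (2 π z)` vanishes somewhere on `ℂ`. Hence some `x` has `f^q x ≠ x + p`, and this strict
inequality survives a small change of the parameter. It bounds the rotation number on one side by
`p / q`; when the parameter is moved in the matching direction, monotonicity gives the other bound.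

*Irrational case.* Mathlib provides a monotone degree-one `k` with `k (t + a) = f (k t)`. At a
continuity point `t` of `k`, choose `q > 0` and `p` with `q a - p` negative and tiny
(`exists_mul_sub_mem_Ioo`); then `f^q (k t)` lies below `k t + p` by less than any prescribed
amount. Raising the parameter by `δ` raises `f^q` by at least `δ` (`iterate_add_le`), so the new
map moves `k t` beyond `k t + p` under `q` iterates. Its rotation number is therefore at least
`p / q > a`.
-/

open Real Filter Set

noncomputable section

/-- The Arnold family `f_{λ,σ}(x) = x + λ + (σ/(2π)) sin(2πx)`. -/
def arnold (lam σ : ℝ) : ℝ → ℝ :=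
  fun x => x + lam + σ / (2 * π) * Real.sin (2 * π * x)

/-! ### Arnold maps as degree-one lifts -/

/-- The Arnold map is strictly increasing, as `sin` is `1`-Lipschitz. -/
lemma arnold_strictMono {σ : ℝ} (hσ : σ ∈ Set.Ioo (0:ℝ) 1) (lam : ℝ) :
    StrictMono (arnold lam σ) := by
  intro x y hxy
  have hπ := Real.pi_pos
  have h1 : |Real.sin (2 * π * x) - Real.sin (2 * π * y)| ≤ |2 * π * x - 2 * π * y| :=
    Real.abs_sin_sub_sin_le _ _
  have h2 : |2 * π * x - 2 * π * y| = 2 * π * (y - x) := by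
    rw [abs_sub_comm, ← mul_sub, abs_of_pos (by have := sub_pos.2 hxy; positivity)]
  rw [h2] at h1
  have h3 := (abs_le.1 h1).2
  have h4 : σ / (2 * π) * (Real.sin (2 * π * x) - Real.sin (2 * π * y)) ≤ σ * (y - x) := by
    calc _ ≤ σ / (2 * π) * (2 * π * (y - x)) :=
          mul_le_mul_of_nonneg_left h3 (div_nonneg hσ.1.le (by positivity))
      _ = σ * (y - x) := by field_simp
  have h5 : σ * (y - x) < 1 * (y - x) := mul_lt_mul_of_pos_right hσ.2 (sub_pos.2 hxy)
  simp only [arnold]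
  linarith

lemma arnold_continuous (lam σ : ℝ) : Continuous (arnold lam σ) := by
  unfold arnold
  fun_prop

/-- The Arnold map as a lift of a degree-one circle map. -/
def arnoldLift {σ : ℝ} (hσ : σ ∈ Set.Ioo (0:ℝ) 1) (lam : ℝ) : CircleDeg1Lift where
  toFun := arnold lam σ
  monotone' := (arnold_strictMono hσ lam).monotone
  map_add_one' x := by
    simp only [arnold]
    rw [mul_add, mul_one, Real.sin_add_two_pi]
    ring

lemma coe_arnoldLift {σ : ℝ} (hσ : σ ∈ Set.Ioo (0:ℝ) 1) (lam : ℝ) :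
    ⇑(arnoldLift hσ lam) = arnold lam σ := rfl

lemma hasRotationNumber_iff {σ : ℝ} (hσ : σ ∈ Set.Ioo (0:ℝ) 1) (lam a : ℝ) :
    HasRotationNumber (arnold lam σ) a ↔ (arnoldLift hσ lam).translationNumber = a := by
  have h := (arnoldLift hσ lam).tendsto_translation_number₀
  simp only [CircleDeg1Lift.coe_pow, coe_arnoldLift] at h
  constructor
  · intro h'
    exact tendsto_nhds_unique h h'
  · rintro rfl
    exact h

lemma arnoldLift_mono {σ : ℝ} (hσ : σ ∈ Set.Ioo (0:ℝ) 1) : Monotone (arnoldLift hσ) := by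
  intro l₁ l₂ h x
  change arnold l₁ σ x ≤ arnold l₂ σ x
  simp only [arnold]
  linarith

lemma arnoldLift_bijective {σ : ℝ} (hσ : σ ∈ Set.Ioo (0:ℝ) 1) (lam : ℝ) :
    Function.Bijective (arnoldLift hσ lam) :=
  ⟨(arnold_strictMono hσ lam).injective,
    (CircleDeg1Lift.continuous_iff_surjective _).1 (arnold_continuous lam σ)⟩

/-! ### Iterates of Arnold maps -/

/-- No positive iterate of an Arnold map is a translation: the entire
extension of the map has a critical point, a translation has none. -/
lemma arnold_iterate_ne {σ : ℝ} (hσ : σ ∈ Set.Ioo (0:ℝ) 1) (lam c : ℝ) {n : ℕ} (hn : 0 < n) :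
    ∃ x, (arnold lam σ)^[n] x ≠ x + c := by
  by_contra! H
  let F : ℂ → ℂ := fun z => z + lam + σ / (2 * π) * Complex.sin (2 * π * z)
  have hF : Differentiable ℂ F := by
    simp only [F]
    fun_prop
  have hFr : ∀ x : ℝ, F x = (arnold lam σ x : ℝ) := by
    intro x
    simp [F, arnold]
  have hFn : ∀ (m : ℕ) (x : ℝ), F^[m] x = ((arnold lam σ)^[m] x : ℝ) := by
    intro m
    induction m with
    | zero => intro x; rfl
    | succ m ih => intro x; rw [Function.iterate_succ_apply, Function.iterate_succ_apply, hFr, ih]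
  have hdiff : ∀ m : ℕ, Differentiable ℂ F^[m] := fun m => hF.iterate m
  have heq : F^[n] = fun z => z + (c : ℂ) := by
    have hA : AnalyticOnNhd ℂ F^[n] univ :=
      (hdiff n).differentiableOn.analyticOnNhd isOpen_univ
    have hB : AnalyticOnNhd ℂ (fun z => z + (c : ℂ)) univ :=
      (show Differentiable ℂ (fun z : ℂ => z + (c : ℂ)) by fun_prop).differentiableOn.analyticOnNhd
        isOpen_univ
    refine hA.eq_of_frequently_eq (z₀ := 0) hB ?_
    -- the two functions agree at the real points `1 / (m + 1)`, which accumulate at `0`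
    have ht : Tendsto (fun m : ℕ => (((1 / ((m : ℝ) + 1) : ℝ)) : ℂ)) atTop (nhdsWithin 0 {0}ᶜ) := by
      refine tendsto_nhdsWithin_iff.2 ⟨?_, Eventually.of_forall fun m => ?_⟩
      · have := (Complex.continuous_ofReal.tendsto 0).comp
          (tendsto_one_div_add_atTop_nhds_zero_nat (𝕜 := ℝ))
        simpa [Function.comp_def] using this
      · have : (1 / ((m : ℝ) + 1)) ≠ 0 := by positivity
        simpa only [mem_compl_iff, mem_singleton_iff, Complex.ofReal_eq_zero] using this
    refine ht.frequently (Frequently.of_forall fun m => ?_)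
    rw [hFn, H]
    push_cast
    rfl
  obtain ⟨w, hw⟩ := Complex.cos_surjective (-(1 / σ : ℂ))
  have hπ : (π : ℂ) ≠ 0 := Complex.ofReal_ne_zero.2 Real.pi_ne_zero
  have hσ0 : (σ : ℂ) ≠ 0 := Complex.ofReal_ne_zero.2 hσ.1.ne'
  have hcrit : HasDerivAt F 0 (w / (2 * π)) := by
    have h1 : HasDerivAt (fun z : ℂ => 2 * π * z) (2 * π * 1) (w / (2 * π)) :=
      (hasDerivAt_id _).const_mul _
    have h2 := ((hasDerivAt_id (w / (2 * π))).add_const (lam : ℂ)).add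
      ((h1.csin).const_mul (σ / (2 * π) : ℂ))
    have h3 : (1 : ℂ) + σ / (2 * π) * (Complex.cos (2 * π * (w / (2 * π))) * (2 * π * 1)) = 0 := by
      rw [mul_div_cancel₀ w (mul_ne_zero two_ne_zero hπ), hw]
      field_simp
      ring
    rw [h3] at h2
    exact h2
  obtain ⟨m, rfl⟩ : ∃ m, n = m + 1 := ⟨n - 1, by omega⟩
  have h0 := ((hdiff m).differentiableAt.hasDerivAt).comp (w / (2 * π)) hcrit
  rw [← Function.iterate_succ, heq, mul_zero] at h0
  exact zero_ne_one (h0.unique ((hasDerivAt_id _).add_const _))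

lemma continuous_arnold_iterate (σ x : ℝ) (n : ℕ) :
    Continuous fun lam => (arnold lam σ)^[n] x := by
  induction n with
  | zero => exact continuous_const
  | succ n ih =>
    simp only [Function.iterate_succ_apply', arnold] at ih ⊢
    fun_prop

/-- Raising the parameter by `δ ≥ 0` raises every positive iterate by at least `δ`. -/
lemma iterate_add_le {σ : ℝ} (hσ : σ ∈ Set.Ioo (0:ℝ) 1) {l₁ l₂ : ℝ} (h : l₁ ≤ l₂) {n : ℕ}
    (hn : 0 < n) (x : ℝ) :
    (arnold l₁ σ)^[n] x + (l₂ - l₁) ≤ (arnold l₂ σ)^[n] x := by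
  obtain ⟨m, rfl⟩ : ∃ m, n = m + 1 := ⟨n - 1, by omega⟩
  rw [Function.iterate_succ_apply', Function.iterate_succ_apply']
  have h1 : (arnold l₁ σ)^[m] x ≤ (arnold l₂ σ)^[m] x :=
    CircleDeg1Lift.iterate_mono (arnoldLift_mono hσ h) m x
  have h2 := (arnold_strictMono hσ l₂).monotone h1
  refine le_trans (le_of_eq ?_) h2
  simp only [arnold]
  ring

lemma le_translationNumber_of_iterate (f : CircleDeg1Lift) {n : ℕ} (hn : 0 < n) {m : ℤ} {x : ℝ}
    (h : x + m ≤ f^[n] x) : (m : ℝ) / n ≤ f.translationNumber := by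
  rw [← CircleDeg1Lift.coe_pow] at h
  have := CircleDeg1Lift.le_translationNumber_of_add_int_le _ h
  rw [CircleDeg1Lift.translationNumber_pow] at this
  rw [div_le_iff₀ (by exact_mod_cast hn)]
  linarith

lemma translationNumber_le_of_iterate (f : CircleDeg1Lift) {n : ℕ} (hn : 0 < n) {m : ℤ} {x : ℝ}
    (h : f^[n] x ≤ x + m) : f.translationNumber ≤ (m : ℝ) / n := by
  rw [← CircleDeg1Lift.coe_pow] at h
  have := CircleDeg1Lift.translationNumber_le_of_le_add_int _ h
  rw [CircleDeg1Lift.translationNumber_pow] at this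
  rw [le_div_iff₀ (by exact_mod_cast hn)]
  linarith

/-! ### Irrational rotation numbers -/

/-- Multiples of an irrational number approach the integers from below. -/
lemma exists_mul_sub_mem_Ioo_s17 {a : ℝ} (ha : Irrational a) {η : ℝ} (hη : 0 < η) :
    ∃ (q : ℕ) (p : ℤ), 0 < q ∧ (q : ℝ) * a - p ∈ Set.Ioo (-η) 0 := by
  have hne : ∀ (q : ℕ) (p : ℤ), 0 < q → (q : ℝ) * a - p ≠ 0 := fun q p hq h =>
    (ha.natCast_mul hq.ne').ne_int p (sub_eq_zero.1 h)
  obtain ⟨N, hN⟩ := exists_nat_gt (1 / min η 1)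
  have hm : 0 < min η 1 := lt_min hη one_pos
  have hN0 : 0 < N := by
    have : (0:ℝ) < N := lt_trans (by positivity) hN
    exact_mod_cast this
  obtain ⟨q, hq, -, hpq⟩ := Real.exists_nat_abs_mul_sub_round_le a hN0
  set p := round ((q : ℝ) * a)
  have hsmall : |(q : ℝ) * a - p| < min η 1 := by
    refine lt_of_le_of_lt hpq ?_
    rw [div_lt_iff₀ hm] at hN
    rw [div_lt_iff₀ (by positivity)]
    nlinarith
  have hlt := abs_lt.1 (lt_of_lt_of_le hsmall (min_le_left _ _))
  have hlt1 := abs_lt.1 (lt_of_lt_of_le hsmall (min_le_right _ _))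
  rcases lt_or_gt_of_ne (hne q p hq) with h | h
  · exact ⟨q, p, hq, hlt.1, h⟩
  · -- The remainder `r = q a - p` is positive: the last multiple of `r` below `1` falls short
    -- of `1` by less than `r`.
    set r := (q : ℝ) * a - p with hr
    have hn1 : 1 ≤ ⌊1 / r⌋₊ := by
      rw [Nat.one_le_floor_iff, le_div_iff₀ h]
      linarith
    have hnq : 0 < ⌊1 / r⌋₊ * q := Nat.mul_pos hn1 hq
    have h1 : (⌊1 / r⌋₊ : ℝ) * r ≤ 1 := by
      rw [← le_div_iff₀ h]
      exact Nat.floor_le (by positivity)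
    have h2 : 1 < ((⌊1 / r⌋₊ : ℝ) + 1) * r := by
      rw [← div_lt_iff₀ h]
      exact Nat.lt_floor_add_one _
    have h3 : ((⌊1 / r⌋₊ * q : ℕ) : ℝ) * a - ((⌊1 / r⌋₊ * p + 1 : ℤ) : ℝ)
        = (⌊1 / r⌋₊ : ℝ) * r - 1 := by
      rw [hr]
      push_cast
      ring
    refine ⟨⌊1 / r⌋₊ * q, ⌊1 / r⌋₊ * p + 1, hnq, ?_, lt_of_le_of_ne ?_ (hne _ _ hnq)⟩
    · rw [h3]
      linarith [hlt.2]
    · rw [h3]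
      linarith

/-- Above an irrational value, the rotation number increases strictly. -/
lemma translationNumber_lt_of_irrational {σ : ℝ} (hσ : σ ∈ Set.Ioo (0:ℝ) 1) {l₀ l : ℝ}
    (h : l₀ < l) (ha : Irrational (arnoldLift hσ l₀).translationNumber) :
    (arnoldLift hσ l₀).translationNumber < (arnoldLift hσ l).translationNumber := by
  set a := (arnoldLift hσ l₀).translationNumber with ha_def
  let T : CircleDeg1Liftˣ := CircleDeg1Lift.translate (Multiplicative.ofAdd a)
  obtain ⟨k, hk⟩ := CircleDeg1Lift.semiconj_of_isUnit_of_translationNumber_eq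
    (f₁ := (T : CircleDeg1Lift)) (f₂ := arnoldLift hσ l₀) T.isUnit
    (CircleDeg1Lift.isUnit_iff_bijective.2 (arnoldLift_bijective hσ l₀))
    (CircleDeg1Lift.translationNumber_translate a)
  obtain ⟨t, ht⟩ : ∃ t, ContinuousAt k t := by
    by_contra! hcon
    refine Set.not_countable_univ (α := ℝ) ?_
    have := k.monotone.countable_not_continuousAt
    rwa [show {x | ¬ContinuousAt k x} = univ from eq_univ_of_forall hcon] at this
  obtain ⟨η, hη, hball⟩ := Metric.continuousAt_iff.1 ht (l - l₀) (sub_pos.2 h)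
  obtain ⟨q, p, hq, hlo, hhi⟩ := exists_mul_sub_mem_Ioo_s17 ha hη
  have hiter : (arnold l₀ σ)^[q] (k t) = k (t + (q * a - p)) + p := by
    have h1 := (hk.iterate_right q).eq t
    rw [CircleDeg1Lift.translate_iterate] at h1
    rw [coe_arnoldLift] at h1
    rw [← h1, CircleDeg1Lift.translate_apply, ← CircleDeg1Lift.map_add_int]
    congr 1
    ring
  have hclose := hball (x := t + (q * a - p)) (by
    rw [Real.dist_eq, add_sub_cancel_left, abs_of_neg hhi]
    linarith)
  rw [Real.dist_eq] at hclose
  have hup := iterate_add_le hσ h.le hq (k t)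
  have hle : (p : ℝ) / q ≤ (arnoldLift hσ l).translationNumber := by
    refine le_translationNumber_of_iterate _ hq (x := k t) ?_
    rw [coe_arnoldLift]
    linarith [(abs_lt.1 hclose).1]
  refine lt_of_lt_of_le ?_ hle
  rw [lt_div_iff₀ (by exact_mod_cast hq)]
  linarith

/-! ### Rational rotation numbers -/

/-- At a rational rotation number the parameter can be moved in at least one direction without
changing the rotation number. -/
lemma exists_interval {σ : ℝ} (hσ : σ ∈ Set.Ioo (0:ℝ) 1) (l₀ : ℝ) (p : ℤ) {n : ℕ} (hn : 0 < n)
    (h : (arnoldLift hσ l₀).translationNumber = (p : ℝ) / n) :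
    ∃ l u : ℝ, l < u ∧ l₀ ∈ Set.Icc l u ∧
      ∀ lam ∈ Set.Icc l u, (arnoldLift hσ lam).translationNumber = (p : ℝ) / n := by
  have hmono : ∀ {x y}, x ≤ y →
      (arnoldLift hσ x).translationNumber ≤ (arnoldLift hσ y).translationNumber :=
    fun hxy => CircleDeg1Lift.translationNumber_mono (arnoldLift_mono hσ hxy)
  obtain ⟨x, hx⟩ := arnold_iterate_ne hσ l₀ p hn
  have hc := (continuous_arnold_iterate σ x n).continuousAt (x := l₀)
  rcases lt_or_gt_of_ne hx with hx | hx
  · obtain ⟨ε, hε, hball⟩ := Metric.eventually_nhds_iff.1 (hc.eventually_lt_const hx)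
    refine ⟨l₀, l₀ + ε / 2, by linarith, ⟨le_rfl, by linarith⟩, fun lam hlam => ?_⟩
    refine le_antisymm (translationNumber_le_of_iterate _ hn (x := x) ?_) (h ▸ hmono hlam.1)
    refine (hball ?_).le
    rw [Real.dist_eq, abs_lt]
    constructor <;> linarith [hlam.1, hlam.2]
  · obtain ⟨ε, hε, hball⟩ := Metric.eventually_nhds_iff.1 (hc.eventually_const_lt hx)
    refine ⟨l₀ - ε / 2, l₀, by linarith, ⟨by linarith, le_rfl⟩, fun lam hlam => ?_⟩
    refine le_antisymm (h ▸ hmono hlam.2) (le_translationNumber_of_iterate _ hn (x := x) ?_)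
    refine (hball ?_).le
    rw [Real.dist_eq, abs_lt]
    constructor <;> linarith [hlam.1, hlam.2]

theorem stmt_17 (σ : ℝ) (hσ : σ ∈ Set.Ioo (0:ℝ) 1) :
    -- (a) monotonicity of the rotation number in λ
    (∀ lam₁ lam₂ a₁ a₂ : ℝ, lam₁ ≤ lam₂ →
      HasRotationNumber (arnold lam₁ σ) a₁ → HasRotationNumber (arnold lam₂ σ) a₂ →
      a₁ ≤ a₂) ∧
    -- (b) local constancy at rational rotation numbers
    (∀ (lam₀ : ℝ) (p q : ℤ), q ≠ 0 →
      HasRotationNumber (arnold lam₀ σ) ((p : ℝ) / (q : ℝ)) →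
      ∃ l u : ℝ, l < u ∧ lam₀ ∈ Set.Icc l u ∧
        ∀ lam ∈ Set.Icc l u, HasRotationNumber (arnold lam σ) ((p : ℝ) / (q : ℝ))) ∧
    -- (c) strict monotonicity at irrational rotation numbers
    (∀ lam₀ a : ℝ, HasRotationNumber (arnold lam₀ σ) a → Irrational a →
      (∀ lam b : ℝ, lam₀ < lam → HasRotationNumber (arnold lam σ) b → a < b) ∧
      (∀ lam b : ℝ, lam < lam₀ → HasRotationNumber (arnold lam σ) b → b < a)) := by
  simp only [hasRotationNumber_iff hσ]
  refine ⟨?_, ?_, ?_⟩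
  · rintro l₁ l₂ _ _ h rfl rfl
    exact CircleDeg1Lift.translationNumber_mono (arnoldLift_mono hσ h)
  · intro l₀ p q hq h
    -- normalise the fraction to a positive natural denominator
    obtain ⟨p', n, hn, hpn⟩ : ∃ (p' : ℤ) (n : ℕ), 0 < n ∧ (p : ℝ) / q = (p' : ℝ) / n := by
      obtain ⟨n, rfl | rfl⟩ := q.eq_nat_or_neg
      · exact ⟨p, n, by omega, by push_cast; rfl⟩
      · exact ⟨-p, n, by omega, by push_cast; rw [div_neg, neg_div]⟩
    rw [hpn] at h ⊢
    exact exists_interval hσ l₀ p' hn h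
  · rintro l₀ _ rfl ha
    refine ⟨?_, ?_⟩
    · rintro l _ h rfl
      exact translationNumber_lt_of_irrational hσ h ha
    · rintro l _ h rfl
      refine lt_of_le_of_ne
        (CircleDeg1Lift.translationNumber_mono (arnoldLift_mono hσ h.le)) fun heq => ?_
      -- equality would make the value at `l` irrational too, so it would increase strictly
      exact (translationNumber_lt_of_irrational hσ h (heq ▸ ha)).ne heq
end
end
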